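/- Trace theorem for piecewise H¹ functions: Let 𝒯_h be a shape-regular triangulation of a bounded polygonal domain Ω ⊂ ℝ² with shape regularity constant 𝒦. There is a constant C depending only on Ω and 𝒦 such that ‖u‖_{L²(∂Ω)} ≤ C ‖u‖_{H¹_h} for all u ∈ H¹_h, where ‖u‖²_{H¹_h} = ‖u‖²_{L²(Ω)} + ∫_{Ω_h} |∇u|² + Σ_{e ∈ ℰ⁰_h} |e|⁻¹ ∫_e [u]². -/

import Mathlib

open MeasureTheory Set
open scoped Classical

noncomputable section

abbrev Pt : Type := EuclideanSpace ℝ (Fin 2)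

structure Tri where
  A : Pt
  B : Pt
  C : Pt

namespace Tri

def cross (t : Tri) : ℝ :=
  (t.B 0 - t.A 0) * (t.C 1 - t.A 1) - (t.B 1 - t.A 1) * (t.C 0 - t.A 0)

/-- Non-degeneracy (the three vertices are not collinear). -/
def Nondeg (t : Tri) : Prop := t.cross ≠ 0

def area (t : Tri) : ℝ := |t.cross| / 2

def la (t : Tri) : ℝ := dist t.B t.C
def lb (t : Tri) : ℝ := dist t.A t.C
def lc (t : Tri) : ℝ := dist t.A t.B

/-- Inradius of a triangle: `r = 2·Area/(a+b+c)`. -/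
def inradius (t : Tri) : ℝ := 2 * t.area / (t.la + t.lb + t.lc)

/-- Circumradius of a triangle: `R = abc/(4·Area)`. -/
def circumradius (t : Tri) : ℝ := t.la * t.lb * t.lc / (4 * t.area)

/-- Shape regularity constant `R/r` of a triangle. -/
def shapeReg (t : Tri) : ℝ := t.circumradius / t.inradius

def closedHull (t : Tri) : Set Pt := convexHull ℝ {t.A, t.B, t.C}

def openHull (t : Tri) : Set Pt := interior t.closedHull

def edgeList (t : Tri) : List (Pt × Pt) := [(t.A, t.B), (t.B, t.C), (t.C, t.A)]

end Tri

/-- Two (oriented) edges coincide as unoriented segments. -/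
def SameEdge (e e' : Pt × Pt) : Prop := e' = e ∨ e' = (e.2, e.1)

/-- Arclength integral of `f` over the straight segment from `p` to `q`. -/
def segInt (p q : Pt) (f : Pt → ℝ) : ℝ :=
  dist p q * ∫ s in (0:ℝ)..1, f (p + s • (q - p))

/-- A bounded polygonal domain in the plane. -/
def IsPolygon (Ω : Set Pt) : Prop :=
  Ω.Nonempty ∧ Bornology.IsBounded Ω ∧
    ∃ S : Finset Tri, (∀ t ∈ S, t.Nondeg) ∧ Ω = interior (⋃ t ∈ S, t.closedHull)

/-- A (conforming) triangulation of the polygonal domain `Ω`. -/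
structure Triangulation (Ω : Set Pt) where
  tris : Finset Tri
  nondeg : ∀ t ∈ tris, t.Nondeg
  cover : Ω = interior (⋃ t ∈ tris, t.closedHull)
  disj : ∀ t ∈ tris, ∀ t' ∈ tris, t ≠ t' → t.openHull ∩ t'.openHull = ∅
  conforming : ∀ t ∈ tris, ∀ e ∈ t.edgeList,
      segment ℝ e.1 e.2 ⊆ frontier Ω ∨
      ∃ t' ∈ tris, t' ≠ t ∧ ∃ e' ∈ t'.edgeList, SameEdge e e'

namespace Triangulation

variable {Ω : Set Pt}

/-- All triangles have shape regularity constant at most `K`. -/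
def ShapeRegular (T : Triangulation Ω) (K : ℝ) : Prop :=
  ∀ t ∈ T.tris, t.shapeReg ≤ K

/-- `‖u‖²_{L²(Ω)}` of a piecewise function. -/
def sqL2 (T : Triangulation Ω) (u : Tri → Pt → ℝ) : ℝ :=
  ∑ t ∈ T.tris, ∫ x in t.openHull, (u t x) ^ 2

/-- `∫_{Ω_h} |∇u|²` of a piecewise function. -/
def gradSq (T : Triangulation Ω) (u : Tri → Pt → ℝ) : ℝ :=
  ∑ t ∈ T.tris, ∫ x in t.openHull, ‖fderiv ℝ (u t) x‖ ^ 2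

/-- Contribution `Σ_{e shared by t₁,t₂} |e|⁻¹ ∫_e [u]²` of the common edges of `t₁, t₂`. -/
def edgeJump (u : Tri → Pt → ℝ) (t₁ t₂ : Tri) : ℝ :=
  ((t₁.edgeList.map fun e =>
    if ∃ e' ∈ t₂.edgeList, SameEdge e e' then
      (dist e.1 e.2)⁻¹ * segInt e.1 e.2 (fun x => (u t₁ x - u t₂ x) ^ 2)
    else 0)).sum

/-- `Σ_{e ∈ ℰ⁰_h} |e|⁻¹ ∫_e [u]²` (each interior edge counted once, whence the `1/2`). -/
def jumpSq (T : Triangulation Ω) (u : Tri → Pt → ℝ) : ℝ :=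
  (1/2) * ∑ t₁ ∈ T.tris, ∑ t₂ ∈ T.tris, if t₁ ≠ t₂ then edgeJump u t₁ t₂ else 0

/-- The squared `H¹_h` norm. -/
def normSq (T : Triangulation Ω) (u : Tri → Pt → ℝ) : ℝ :=
  T.sqL2 u + T.gradSq u + T.jumpSq u

/-- `∫_{∂Ω} u²` via the traces from the triangles having a boundary edge. -/
def bdrySq (T : Triangulation Ω) (u : Tri → Pt → ℝ) : ℝ :=
  ∑ t ∈ T.tris, ((t.edgeList.map fun e =>
    if segment ℝ e.1 e.2 ⊆ frontier Ω then segInt e.1 e.2 (fun x => (u t x) ^ 2) else 0)).sum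

/-- `u` is a piecewise `H¹` function subordinate to the triangulation. -/
def PwH1 (T : Triangulation Ω) (u : Tri → Pt → ℝ) : Prop :=
  ∀ t ∈ T.tris, ContinuousOn (u t) t.closedHull ∧ DifferentiableOn ℝ (u t) t.openHull ∧
    IntegrableOn (fun x => (u t x) ^ 2) t.openHull ∧
    IntegrableOn (fun x => ‖fderiv ℝ (u t) x‖ ^ 2) t.openHull

/-- `v : ℝ² → ℝ` is the extension by zero of the piecewise function `u`. -/
def Glues (T : Triangulation Ω) (u : Tri → Pt → ℝ) (v : Pt → ℝ) : Prop :=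
  (∀ t ∈ T.tris, ∀ x ∈ t.openHull, v x = u t x) ∧ ∀ x, x ∉ Ω → v x = 0

end Triangulation

/-!
Fix one triangulation `T₀` of `Ω`. Each half of a boundary edge of `T₀` is swept along a direction
pointing into its triangle; these finitely many charts depend only on `Ω`. Given any shape-regular
triangulation `T`, almost every line of a chart avoids the vertices of `T`. Along such a line the
fundamental theorem of calculus is applied to `(1 - s) u²` in each triangle of `T` that is crossed,
the weight removing the contribution of the far endpoint, and the jumps of `u²` at the crossed edges
are added up. The jump across an edge `e` is at most `(1 + |e|) |e|⁻¹ [u]² + |e| u²`, and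
`|e| ∫_e u²` is bounded by the trace inequality in a single triangle, with a constant depending only
on the shape regularity. Integrating over the lines of the chart turns the sum over the crossed
triangles into the `H¹_h` norm.
-/

open Filter Topology
open scoped ENNReal

section Telescoping

theorem sum_le_sum_add_sum_of_injOn {ι : Type*} {S S₀ E : Finset ι} {next : ι → ι}
    {p q c j : ι → ℝ≥0∞} (hS₀ : S₀ ⊆ S) (hES : E ⊆ S) (hp : ∀ t ∈ S, p t ≠ ⊤)
    (hpq : ∀ t ∈ S, p t ≤ q t + c t) (hq : ∀ t ∈ S, t ∉ E → q t = 0)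
    (hmaps : ∀ t ∈ E, next t ∈ S \ S₀) (hinj : InjOn next E)
    (hj : ∀ t ∈ E, q t ≤ p (next t) + j t) :
    ∑ t ∈ S₀, p t ≤ ∑ t ∈ S, c t + ∑ t ∈ E, j t := by
  have hfin : ∑ t ∈ S \ S₀, p t ≠ ⊤ :=
    ENNReal.sum_ne_top.2 fun t ht => hp t (Finset.sdiff_subset ht)
  refine (ENNReal.add_le_add_iff_left hfin).1 ?_
  calc ∑ t ∈ S \ S₀, p t + ∑ t ∈ S₀, p t
      = ∑ t ∈ S, p t := Finset.sum_sdiff hS₀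
    _ ≤ ∑ t ∈ S, q t + ∑ t ∈ S, c t := by
        rw [← Finset.sum_add_distrib]; exact Finset.sum_le_sum hpq
    _ = ∑ t ∈ E, q t + ∑ t ∈ S, c t := by rw [Finset.sum_subset hES hq]
    _ ≤ (∑ t ∈ E, p (next t) + ∑ t ∈ E, j t) + ∑ t ∈ S, c t := by
        rw [← Finset.sum_add_distrib]; gcongr with t ht; exact hj t ht
    _ = (∑ t ∈ E.image next, p t + ∑ t ∈ E, j t) + ∑ t ∈ S, c t := by
        rw [Finset.sum_image hinj]
    _ ≤ (∑ t ∈ S \ S₀, p t + ∑ t ∈ E, j t) + ∑ t ∈ S, c t := by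
        gcongr; exact Finset.image_subset_iff.2 hmaps
    _ = ∑ t ∈ S \ S₀, p t + (∑ t ∈ S, c t + ∑ t ∈ E, j t) := by
        rw [add_assoc, add_comm (∑ t ∈ E, j t)]

/-- The fundamental theorem of calculus for `(1 - s) * f s ^ 2`, whose derivative is at least
`-(2 * f s ^ 2 + f' s ^ 2)` on `[0, 1]`. -/
theorem ofReal_one_sub_mul_sq_le {f : ℝ → ℝ} {a b : ℝ} (ha : 0 ≤ a) (hab : a ≤ b) (hb : b ≤ 1)
    (hc : ContinuousOn f (Icc a b)) (hd : DifferentiableOn ℝ f (Ioo a b)) :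
    ENNReal.ofReal ((1 - a) * f a ^ 2) ≤ ENNReal.ofReal ((1 - b) * f b ^ 2)
      + ∫⁻ s in Ioo a b, ENNReal.ofReal (2 * f s ^ 2 + deriv f s ^ 2) := by
  set φ : ℝ → ℝ := fun s => 2 * f s ^ 2 + deriv f s ^ 2
  have hφ0 : ∀ s, 0 ≤ φ s := fun s => by positivity
  rcases eq_or_ne (∫⁻ s in Ioo a b, ENNReal.ofReal (φ s)) ⊤ with htop | htop
  · simp [φ, htop]
  have hφm : AEStronglyMeasurable φ (volume.restrict (Icc a b)) :=
    (((hc.aestronglyMeasurable measurableSet_Icc).pow 2).const_mul 2).add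
      ((measurable_deriv f).pow_const 2).aestronglyMeasurable
  have hφi : IntegrableOn φ (Icc a b) := by
    refine ⟨hφm, ?_⟩
    rwa [hasFiniteIntegral_iff_ofReal (.of_forall hφ0), ← restrict_Ioo_eq_restrict_Icc,
      lt_top_iff_ne_top]
  have hderiv : ∀ s ∈ Ioo a b, HasDerivWithinAt (fun s => -((1 - s) * f s ^ 2))
      (f s ^ 2 - (1 - s) * (2 * f s * deriv f s)) (Ioi s) s := by
    intro s hs
    have hf := (hd.differentiableAt (isOpen_Ioo.mem_nhds hs)).hasDerivAt
    have hF := (((hasDerivAt_id' s).const_sub 1).fun_mul (hf.fun_pow 2)).fun_neg.hasDerivWithinAt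
      (s := Ioi s)
    exact hF.congr_deriv (by push_cast; ring)
  have hle : ∀ s ∈ Ioo a b, f s ^ 2 - (1 - s) * (2 * f s * deriv f s) ≤ φ s := by
    intro s hs
    have h0 : 0 ≤ 1 - s := by linarith [hs.2]
    have h1 : 0 ≤ s := by linarith [hs.1]
    simp only [φ]
    nlinarith [mul_nonneg h0 (sq_nonneg (f s + deriv f s)), mul_nonneg h1 (sq_nonneg (f s)),
      mul_nonneg h1 (sq_nonneg (deriv f s))]
  have key := intervalIntegral.sub_le_integral_of_hasDeriv_right_of_le hab
    (by fun_prop) hderiv hφi hle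
  have hint : ∫⁻ s in Ioo a b, ENNReal.ofReal (φ s) = ENNReal.ofReal (∫ s in a..b, φ s) := by
    rw [intervalIntegral.integral_of_le hab, restrict_Ioo_eq_restrict_Ioc,
      ofReal_integral_eq_lintegral_ofReal (hφi.mono_set Ioc_subset_Icc_self) (.of_forall hφ0)]
  rw [hint, ← ENNReal.ofReal_add (mul_nonneg (by linarith) (sq_nonneg _))
    (intervalIntegral.integral_nonneg hab fun s _ => hφ0 s)]
  exact ENNReal.ofReal_le_ofReal (by linarith)

theorem injOn_of_pairwiseDisjoint_Ioo {ι α : Type*} [LinearOrder α] [DenselyOrdered α]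
    {S : Set ι} {a b : ι → α} (hab : ∀ t ∈ S, a t < b t)
    (hdisj : S.PairwiseDisjoint fun t => Ioo (a t) (b t)) : InjOn b S := by
  intro t₁ h₁ t₂ h₂ hb
  by_contra hne
  obtain ⟨m, hm, hmb⟩ := exists_between (max_lt (hab _ h₁) (hb ▸ hab _ h₂))
  exact (hdisj h₁ h₂ hne).le_bot
    ⟨⟨(le_max_left _ _).trans_lt hm, hmb⟩, ⟨(le_max_right _ _).trans_lt hm, hb ▸ hmb⟩⟩

theorem ofReal_mul_le_ofReal_mul_add {θ x y : ℝ} (h0 : 0 ≤ θ) (h1 : θ ≤ 1) (hy : 0 ≤ y) :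
    ENNReal.ofReal (θ * x) ≤ ENNReal.ofReal (θ * y) + ENNReal.ofReal |x - y| := by
  rw [← ENNReal.ofReal_add (mul_nonneg h0 hy) (abs_nonneg _)]
  refine ENNReal.ofReal_le_ofReal ?_
  nlinarith [le_abs_self (x - y), abs_nonneg (x - y)]

theorem sum_ofReal_sq_le_of_chain {ι : Type*} {S : Finset ι} {a b : ι → ℝ} {f : ι → ℝ → ℝ}
    {j : ι → ℝ≥0∞} (hab : ∀ t ∈ S, a t < b t) (ha : ∀ t ∈ S, a t ∈ Ico 0 1)
    (hdisj : (S : Set ι).PairwiseDisjoint fun t => Ioo (a t) (b t))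
    (hc : ∀ t ∈ S, ContinuousOn (f t) (Icc (a t) (b t)))
    (hd : ∀ t ∈ S, DifferentiableOn ℝ (f t) (Ioo (a t) (b t)))
    (hnext : ∀ t ∈ S, b t < 1 → ∃ t' ∈ S, a t' = b t ∧
      ENNReal.ofReal |f t (b t) ^ 2 - f t' (b t) ^ 2| ≤ j t) :
    ∑ t ∈ S with a t = 0, ENNReal.ofReal (f t 0 ^ 2) ≤
      (∑ t ∈ S, ∫⁻ s in Ioo (a t) (min (b t) 1),
        ENNReal.ofReal (2 * f t s ^ 2 + deriv (f t) s ^ 2)) + ∑ t ∈ S, j t := by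
  choose! next hnS hna hnj using hnext
  set E : Finset ι := {t ∈ S | b t < 1}
  have hES : E ⊆ S := Finset.filter_subset _ _
  have hEb : ∀ t ∈ E, b t < 1 := fun t ht => (Finset.mem_filter.1 ht).2
  have hinj : InjOn next E := fun t₁ h₁ t₂ h₂ he =>
    injOn_of_pairwiseDisjoint_Ioo hab hdisj (hES h₁) (hES h₂) <| by
      rw [← hna _ (hES h₁) (hEb _ h₁), ← hna _ (hES h₂) (hEb _ h₂), he]
  have hmaps : ∀ t ∈ E, next t ∈ S \ {t ∈ S | a t = 0} := by
    intro t ht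
    have h0 : 0 < a (next t) := by
      rw [hna t (hES ht) (hEb t ht)]
      exact (ha t (hES ht)).1.trans_lt (hab t (hES ht))
    exact Finset.mem_sdiff.2
      ⟨hnS t (hES ht) (hEb t ht), fun h => h0.ne' (Finset.mem_filter.1 h).2⟩
  have hjump : ∀ t ∈ E, ENNReal.ofReal ((1 - min (b t) 1) * f t (min (b t) 1) ^ 2) ≤
      ENNReal.ofReal ((1 - a (next t)) * f (next t) (a (next t)) ^ 2) + j t := by
    intro t ht
    have hb1 := hEb t ht
    have hb0 : 0 ≤ b t := (ha t (hES ht)).1.trans (hab t (hES ht)).le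
    rw [min_eq_left hb1.le, hna t (hES ht) hb1]
    exact (ofReal_mul_le_ofReal_mul_add (sub_nonneg.2 hb1.le) (by linarith) (sq_nonneg _)).trans
      (add_le_add_right (hnj t (hES ht) hb1) _)
  have hlast : ∀ t ∈ S, t ∉ E →
      ENNReal.ofReal ((1 - min (b t) 1) * f t (min (b t) 1) ^ 2) = 0 := by
    intro t ht htE
    have hb1 : 1 ≤ b t := not_lt.1 fun h => htE (Finset.mem_filter.2 ⟨ht, h⟩)
    simp [min_eq_right hb1]
  calc ∑ t ∈ S with a t = 0, ENNReal.ofReal (f t 0 ^ 2)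
      = ∑ t ∈ S with a t = 0, ENNReal.ofReal ((1 - a t) * f t (a t) ^ 2) :=
        Finset.sum_congr rfl fun t ht => by simp [(Finset.mem_filter.1 ht).2]
    _ ≤ (∑ t ∈ S, ∫⁻ s in Ioo (a t) (min (b t) 1),
          ENNReal.ofReal (2 * f t s ^ 2 + deriv (f t) s ^ 2)) + ∑ t ∈ E, j t :=
        sum_le_sum_add_sum_of_injOn (p := fun t => ENNReal.ofReal ((1 - a t) * f t (a t) ^ 2))
          (Finset.filter_subset _ _) hES (fun _ _ => ENNReal.ofReal_ne_top)
          (fun t ht => ofReal_one_sub_mul_sq_le (ha t ht).1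
            (le_min (hab t ht).le (ha t ht).2.le) (min_le_right _ _)
            ((hc t ht).mono (Icc_subset_Icc_right (min_le_left _ _)))
            ((hd t ht).mono (Ioo_subset_Ioo_right (min_le_left _ _))))
          hlast hmaps hinj hjump
    _ ≤ _ := by gcongr

end Telescoping

section Line

theorem eq_Ioo_csInf_csSup {s : Set ℝ} (ho : IsOpen s) (hc : IsPreconnected s)
    (hb : Bornology.IsBounded s) (hne : s.Nonempty) : s = Ioo (sInf s) (sSup s) := by
  refine Subset.antisymm ?_
    (IsConnected.Ioo_csInf_csSup_subset ⟨hne, hc⟩ hb.bddBelow hb.bddAbove)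
  rw [← interior_Icc]
  exact interior_maximal (subset_Icc_csInf_csSup hb.bddBelow hb.bddAbove) ho

theorem eq_of_eventually_mem_Ioo_of_notMem {a b c : ℝ} (h : ∀ᶠ s in 𝓝[>] c, s ∈ Ioo a b)
    (hc : c ∉ Ioo a b) : a = c := by
  refine le_antisymm (ge_of_tendsto (f := id) (x := 𝓝[>] c) ?_ (h.mono fun s hs => hs.1.le)) ?_
  · exact tendsto_id.mono_left nhdsWithin_le_nhds
  · obtain ⟨s, hs, hcs⟩ := (h.and self_mem_nhdsWithin).exists
    exact not_lt.1 fun hac => hc ⟨hac, lt_trans hcs hs.2⟩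

variable {E : Type*} [NormedAddCommGroup E] [NormedSpace ℝ E]

/-- The parameters `s` for which the point `y + s • d` of the line through `y` in direction `d`
lies in `U`. -/
def lineSlice (U : Set E) (y d : E) : Set ℝ := {s | y + s • d ∈ U}

theorem lineSlice_eq_Ioo {U : Set E} (ho : IsOpen U) (hc : Convex ℝ U)
    (hb : Bornology.IsBounded U) {y d : E} (hd : d ≠ 0) (hne : (lineSlice U y d).Nonempty) :
    lineSlice U y d = Ioo (sInf (lineSlice U y d)) (sSup (lineSlice U y d)) := by
  have hpre : lineSlice U y d = AffineMap.lineMap (k := ℝ) y (y + d) ⁻¹' U := by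
    ext s; simp [lineSlice, AffineMap.lineMap_apply, add_comm]
  refine eq_Ioo_csInf_csSup ?_ ?_ ?_ hne
  · exact ho.preimage (by fun_prop)
  · rw [hpre]
    exact (hc.affine_preimage _).isPreconnected
  · obtain ⟨R, hR⟩ := hb.exists_norm_le
    refine Metric.isBounded_iff_subset_closedBall 0 |>.2 ⟨(R + ‖y‖) / ‖d‖, fun s hs => ?_⟩
    rw [mem_closedBall_zero_iff, le_div_iff₀ (norm_pos_iff.2 hd), ← norm_smul]
    calc ‖s • d‖ = ‖y + s • d - y‖ := by rw [add_sub_cancel_left]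
      _ ≤ ‖y + s • d‖ + ‖y‖ := norm_sub_le _ _
      _ ≤ R + ‖y‖ := by gcongr; exact hR _ hs

/-- The density `2 u² + D² |∇u|²`; with `D ≥ ‖d‖` it bounds the variation of `(1 - s) u²` along a
segment `s ↦ y + s • d`, `s ∈ [0, 1]`. -/
def h1Density (D : ℝ) (u : E → ℝ) (x : E) : ℝ≥0∞ :=
  ENNReal.ofReal (2 * u x ^ 2 + D ^ 2 * ‖fderiv ℝ u x‖ ^ 2)

theorem ofReal_deriv_line_le_h1Density {D : ℝ} {u : E → ℝ} {y d : E} {s : ℝ} (hD : ‖d‖ ≤ D)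
    (hu : DifferentiableAt ℝ u (y + s • d)) :
    ENNReal.ofReal (2 * u (y + s • d) ^ 2 + deriv (fun s : ℝ => u (y + s • d)) s ^ 2) ≤
      h1Density D u (y + s • d) := by
  have hline : HasDerivAt (fun s : ℝ => y + s • d) d s := by
    simpa using ((hasDerivAt_id s).smul_const d).const_add y
  have hderiv : deriv (fun s : ℝ => u (y + s • d)) s = fderiv ℝ u (y + s • d) d :=
    (hu.hasFDerivAt.comp_hasDerivAt s hline).deriv
  have hle : |fderiv ℝ u (y + s • d) d| ≤ D * ‖fderiv ℝ u (y + s • d)‖ := by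
    rw [mul_comm]
    exact ((fderiv ℝ u (y + s • d)).le_opNorm d).trans (by gcongr)
  refine ENNReal.ofReal_le_ofReal ?_
  rw [hderiv, ← mul_pow]
  gcongr 2 * _ + ?_
  exact sq_le_sq.2 (hle.trans (le_abs_self _))

theorem setLIntegral_line_le_indicator_h1Density {U : Set E} (ho : IsOpen U) {u : E → ℝ}
    (hu : DifferentiableOn ℝ u U) {y d : E} {D : ℝ} (hD : ‖d‖ ≤ D) {I J : Set ℝ}
    (hI : MeasurableSet I) (hIJ : I ⊆ J) (hIU : ∀ s ∈ I, y + s • d ∈ U) :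
    ∫⁻ s in I, ENNReal.ofReal (2 * u (y + s • d) ^ 2 + deriv (fun s : ℝ => u (y + s • d)) s ^ 2) ≤
      ∫⁻ s in J, U.indicator (h1Density D u) (y + s • d) := by
  refine (setLIntegral_mono' hI fun s hs => ?_).trans (lintegral_mono_set hIJ)
  rw [indicator_of_mem (hIU s hs)]
  exact ofReal_deriv_line_le_h1Density hD (hu.differentiableAt (ho.mem_nhds (hIU s hs)))

theorem nonempty_and_sInf_lineSlice_eq {U : Set E} (ho : IsOpen U) (hc : Convex ℝ U)
    (hb : Bornology.IsBounded U) {y d : E} (hd : d ≠ 0) {c : ℝ} (hcU : y + c • d ∉ U)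
    (hev : ∀ᶠ s in 𝓝[>] c, y + s • d ∈ U) :
    (lineSlice U y d).Nonempty ∧ sInf (lineSlice U y d) = c := by
  have hne : (lineSlice U y d).Nonempty := hev.exists
  have hI := lineSlice_eq_Ioo ho hc hb hd hne
  refine ⟨hne, eq_of_eventually_mem_Ioo_of_notMem (b := sSup (lineSlice U y d)) ?_ ?_⟩
  · rw [← hI]; exact hev
  · rw [← hI]; exact hcU

theorem sInf_lineSlice_lt_sSup_and_mapsTo {U : Set E} (ho : IsOpen U) (hc : Convex ℝ U)
    (hb : Bornology.IsBounded U) {y d : E} (hd : d ≠ 0) (hne : (lineSlice U y d).Nonempty) :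
    sInf (lineSlice U y d) < sSup (lineSlice U y d) ∧
      MapsTo (fun s : ℝ => y + s • d)
        (Icc (sInf (lineSlice U y d)) (sSup (lineSlice U y d))) (closure U) ∧
      y + sSup (lineSlice U y d) • d ∉ U := by
  have hI := lineSlice_eq_Ioo ho hc hb hd hne
  set a := sInf (lineSlice U y d)
  set b := sSup (lineSlice U y d)
  have hab : a < b := nonempty_Ioo.1 (hI ▸ hne)
  have hmem : MapsTo (fun s : ℝ => y + s • d) (Ioo a b) U := fun s hs =>
    (hI ▸ hs : s ∈ lineSlice U y d)
  have hbI : b ∉ lineSlice U y d := by rw [hI]; exact right_notMem_Ioo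
  exact ⟨hab, closure_Ioo hab.ne ▸ hmem.closure (by fun_prop), hbI⟩

/-- Summing `(1 - s) u²` along the line `y + s • d` over the cells `U t` that it crosses. -/
theorem sum_ofReal_sq_le_of_lineSlice_chain {ι : Type*} {S : Finset ι} {U : ι → Set E}
    {u : ι → E → ℝ} {j : ι → ℝ≥0∞} {y d : E} {D : ℝ} (hd : d ≠ 0) (hD : ‖d‖ ≤ D)
    (ho : ∀ t ∈ S, IsOpen (U t)) (hconv : ∀ t ∈ S, Convex ℝ (U t))
    (hb : ∀ t ∈ S, Bornology.IsBounded (U t)) (hdisj : (S : Set ι).PairwiseDisjoint U)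
    (hc : ∀ t ∈ S, ContinuousOn (u t) (closure (U t)))
    (hdiff : ∀ t ∈ S, DifferentiableOn ℝ (u t) (U t))
    (hne : ∀ t ∈ S, (lineSlice (U t) y d).Nonempty)
    (ha : ∀ t ∈ S, sInf (lineSlice (U t) y d) ∈ Ico 0 1)
    (hnext : ∀ t ∈ S, ∀ b < 1, sSup (lineSlice (U t) y d) = b →
      ∃ t' ∈ S, sInf (lineSlice (U t') y d) = b ∧
        ENNReal.ofReal |u t (y + b • d) ^ 2 - u t' (y + b • d) ^ 2| ≤ j t) :
    ∑ t ∈ S with sInf (lineSlice (U t) y d) = 0, ENNReal.ofReal (u t y ^ 2) ≤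
      (∑ t ∈ S, ∫⁻ s in Ioo (0 : ℝ) 1, (U t).indicator (h1Density D (u t)) (y + s • d)) +
        ∑ t ∈ S, j t := by
  set a : ι → ℝ := fun t => sInf (lineSlice (U t) y d)
  set b : ι → ℝ := fun t => sSup (lineSlice (U t) y d)
  have hmem : ∀ t ∈ S, MapsTo (fun s : ℝ => y + s • d) (Ioo (a t) (b t)) (U t) := fun t ht s hs =>
    (lineSlice_eq_Ioo (ho t ht) (hconv t ht) (hb t ht) hd (hne t ht) ▸ hs : s ∈ lineSlice (U t) y d)
  have hends := fun t (ht : t ∈ S) => sInf_lineSlice_lt_sSup_and_mapsTo (ho t ht)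
    (hconv t ht) (hb t ht) hd (hne t ht)
  calc ∑ t ∈ S with a t = 0, ENNReal.ofReal (u t y ^ 2)
      = ∑ t ∈ S with a t = 0, ENNReal.ofReal (u t (y + (0 : ℝ) • d) ^ 2) := by
        simp only [zero_smul, add_zero]
    _ ≤ (∑ t ∈ S, ∫⁻ s in Ioo (a t) (min (b t) 1), ENNReal.ofReal
          (2 * u t (y + s • d) ^ 2 + deriv (fun s : ℝ => u t (y + s • d)) s ^ 2)) +
        ∑ t ∈ S, j t :=
        sum_ofReal_sq_le_of_chain (f := fun t s => u t (y + s • d)) (fun t ht => (hends t ht).1) ha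
          (fun t₁ h₁ t₂ h₂ hne => Disjoint.mono (hmem t₁ h₁) (hmem t₂ h₂)
            ((hdisj h₁ h₂ hne).preimage fun s : ℝ => y + s • d))
          (fun t ht => (hc t ht).comp (by fun_prop) (hends t ht).2.1)
          (fun t ht => (hdiff t ht).comp (by fun_prop) (hmem t ht))
          (fun t ht hb1 => hnext t ht (b t) hb1 rfl)
    _ ≤ _ :=
        add_le_add_left (Finset.sum_le_sum fun t ht =>
          setLIntegral_line_le_indicator_h1Density (ho t ht) (hdiff t ht) hD
            measurableSet_Ioo (Ioo_subset_Ioo (ha t ht).1 (min_le_right _ _))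
            fun s hs => hmem t ht ⟨hs.1, hs.2.trans_le (min_le_left _ _)⟩) _

theorem sum_ofReal_sq_le_lintegral_line {ι : Type*} {S : Finset ι} {U : ι → Set E}
    {u : ι → E → ℝ} {j : ι → ℝ≥0∞} {y d : E} {D : ℝ} (hd : d ≠ 0) (hD : ‖d‖ ≤ D)
    (ho : ∀ t ∈ S, IsOpen (U t)) (hconv : ∀ t ∈ S, Convex ℝ (U t))
    (hb : ∀ t ∈ S, Bornology.IsBounded (U t)) (hdisj : (S : Set ι).PairwiseDisjoint U)
    (hc : ∀ t ∈ S, ContinuousOn (u t) (closure (U t)))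
    (hdiff : ∀ t ∈ S, DifferentiableOn ℝ (u t) (U t)) (hy : ∀ t ∈ S, y ∉ U t)
    (hnext : ∀ t ∈ S, ∀ b ∈ Ioo (0 : ℝ) 1, y + b • d ∈ frontier (U t) →
      (∀ᶠ s in 𝓝[<] b, y + s • d ∈ U t) →
      ∃ t' ∈ S, y + b • d ∉ U t' ∧ (∀ᶠ s in 𝓝[>] b, y + s • d ∈ U t') ∧
        ENNReal.ofReal |u t (y + b • d) ^ 2 - u t' (y + b • d) ^ 2| ≤ j t) :
    ∑ t ∈ S with ∀ᶠ s in 𝓝[>] (0 : ℝ), y + s • d ∈ U t, ENNReal.ofReal (u t y ^ 2) ≤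
      (∑ t ∈ S, ∫⁻ s in Ioo (0 : ℝ) 1, (U t).indicator (h1Density D (u t)) (y + s • d)) +
        ∑ t ∈ S, j t := by
  set S' : Finset ι :=
    {t ∈ S | (lineSlice (U t) y d).Nonempty ∧ sInf (lineSlice (U t) y d) ∈ Ico 0 1}
  have hS : S' ⊆ S := Finset.filter_subset _ _
  have hne : ∀ t ∈ S', (lineSlice (U t) y d).Nonempty := fun t ht => (Finset.mem_filter.1 ht).2.1
  have ha : ∀ t ∈ S', sInf (lineSlice (U t) y d) ∈ Ico 0 1 :=
    fun t ht => (Finset.mem_filter.1 ht).2.2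
  have hstart : ∀ t ∈ S, ∀ c ∈ Ico (0 : ℝ) 1, y + c • d ∉ U t →
      (∀ᶠ s in 𝓝[>] c, y + s • d ∈ U t) → t ∈ S' ∧ sInf (lineSlice (U t) y d) = c := by
    intro t ht c hc01 hcU hev
    obtain ⟨hne, rfl⟩ :=
      nonempty_and_sInf_lineSlice_eq (ho t ht) (hconv t ht) (hb t ht) hd hcU hev
    exact ⟨Finset.mem_filter.2 ⟨ht, hne, hc01⟩, rfl⟩
  have hjump : ∀ t ∈ S', ∀ b < 1, sSup (lineSlice (U t) y d) = b →
      ∃ t' ∈ S', sInf (lineSlice (U t') y d) = b ∧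
        ENNReal.ofReal |u t (y + b • d) ^ 2 - u t' (y + b • d) ^ 2| ≤ j t := by
    rintro t ht _ hb1 rfl
    obtain ⟨hab, hcl, hbU⟩ := sInf_lineSlice_lt_sSup_and_mapsTo (ho t (hS ht))
      (hconv t (hS ht)) (hb t (hS ht)) hd (hne t ht)
    have hI := lineSlice_eq_Ioo (ho t (hS ht)) (hconv t (hS ht)) (hb t (hS ht)) hd (hne t ht)
    have hb0 := (ha t ht).1.trans_lt hab
    obtain ⟨t', ht', hbU', hev, hle⟩ := hnext t (hS ht) _ ⟨hb0, hb1⟩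
      ((ho t (hS ht)).frontier_eq ▸ ⟨hcl (right_mem_Icc.2 hab.le), hbU⟩)
      (mem_of_superset (Ioo_mem_nhdsLT hab) hI.ge)
    obtain ⟨htS', hat'⟩ := hstart t' ht' _ ⟨hb0.le, hb1⟩ hbU' hev
    exact ⟨t', htS', hat', hle⟩
  calc ∑ t ∈ S with ∀ᶠ s in 𝓝[>] (0 : ℝ), y + s • d ∈ U t, ENNReal.ofReal (u t y ^ 2)
      ≤ ∑ t ∈ S' with sInf (lineSlice (U t) y d) = 0, ENNReal.ofReal (u t y ^ 2) := by
        refine Finset.sum_le_sum_of_subset fun t ht => ?_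
        obtain ⟨htS, hev⟩ := Finset.mem_filter.1 ht
        exact Finset.mem_filter.2 (hstart t htS 0 ⟨le_rfl, one_pos⟩ (by simpa using hy t htS) hev)
    _ ≤ (∑ t ∈ S', ∫⁻ s in Ioo (0 : ℝ) 1, (U t).indicator (h1Density D (u t)) (y + s • d)) +
        ∑ t ∈ S', j t :=
        sum_ofReal_sq_le_of_lineSlice_chain hd hD (fun t ht => ho t (hS ht))
          (fun t ht => hconv t (hS ht)) (fun t ht => hb t (hS ht)) (hdisj.subset hS)
          (fun t ht => hc t (hS ht)) (fun t ht => hdiff t (hS ht)) hne ha hjump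
    _ ≤ _ := by gcongr

end Line

section Facets

variable {ι ι' E : Type*} [NormedAddCommGroup E] [NormedSpace ℝ E]

/-- The relatively open facet, opposite to the `i`-th vertex, of the simplex whose vertices are an
affine basis `b`. -/
def openFacet (b : AffineBasis ι ℝ E) (i : ι) : Set E :=
  {y | b.coord i y = 0 ∧ ∀ j ≠ i, 0 < b.coord j y}

theorem coord_add (b : AffineBasis ι ℝ E) (i : ι) (y d : E) :
    b.coord i (y + d) = b.coord i y + (b.coord i).linear d := by
  rw [add_comm y, ← vadd_eq_add, AffineMap.map_vadd, vadd_eq_add, add_comm]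

theorem coord_add_smul (b : AffineBasis ι ℝ E) (i : ι) (y d : E) (s : ℝ) :
    b.coord i (y + s • d) = b.coord i y + s * (b.coord i).linear d := by
  rw [coord_add, map_smul, smul_eq_mul]

theorem exists_coord_linear_pos {b : AffineBasis ι ℝ E} {i : ι} {y : E} (hy : y ∈ openFacet b i) :
    ∃ d, 0 < (b.coord i).linear d := by
  refine ⟨b i - y, ?_⟩
  have h := coord_add b i y (b i - y)
  rw [add_sub_cancel, b.coord_apply_eq, hy.1] at h
  linarith

variable [Finite ι] [Finite ι']

theorem eventually_coord_pos_of_mem_openFacet {b : AffineBasis ι ℝ E} {i : ι} {y : E}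
    (hy : y ∈ openFacet b i) : ∀ᶠ z in 𝓝 y, ∀ j ≠ i, 0 < b.coord j z := by
  have := b.finiteDimensional
  refine eventually_all.2 fun j => ?_
  by_cases hj : j = i
  · simp [hj]
  · filter_upwards [(b.coord j).continuous_of_finiteDimensional.continuousAt.eventually
      (lt_mem_nhds (hy.2 j hj))] with z hz _ using hz

theorem eventually_mem_interior_convexHull {b : AffineBasis ι ℝ E} {i : ι} {y d : E} {a : ℝ}
    (hy : y + a • d ∈ openFacet b i) (hd : 0 < (b.coord i).linear d) :
    ∀ᶠ s in 𝓝[>] a, y + s • d ∈ interior (convexHull ℝ (range b)) := by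
  have hcont : Tendsto (fun s : ℝ => y + s • d) (𝓝 a) (𝓝 (y + a • d)) :=
    Continuous.tendsto (by fun_prop) a
  filter_upwards [(hcont.eventually (eventually_coord_pos_of_mem_openFacet hy)).filter_mono
    nhdsWithin_le_nhds, self_mem_nhdsWithin] with s hs hsa
  rw [b.interior_convexHull]
  intro j
  by_cases hj : j = i
  · have hzero := hy.1
    rw [coord_add_smul] at hzero
    rw [hj, coord_add_smul]
    nlinarith [show a < s from hsa]
  · exact hs j hj

theorem coord_linear_neg_of_eventually_mem_interior {b : AffineBasis ι ℝ E} {i : ι} {y d : E}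
    {a : ℝ} (hy : y + a • d ∈ openFacet b i)
    (hd : ∀ᶠ s in 𝓝[<] a, y + s • d ∈ interior (convexHull ℝ (range b))) :
    (b.coord i).linear d < 0 := by
  obtain ⟨s, hs, hsa⟩ := (hd.and self_mem_nhdsWithin).exists
  rw [b.interior_convexHull] at hs
  have hpos := hs i
  have hzero := hy.1
  rw [coord_add_smul] at hpos hzero
  nlinarith [show s < a from hsa]

theorem exists_coord_linear_eq_mul {b : AffineBasis ι ℝ E} {b' : AffineBasis ι' ℝ E} {i : ι}
    {i' : ι'} {y : E} (hy : y ∈ openFacet b i) (hy' : y ∈ openFacet b' i')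
    (hdisj : Disjoint (openFacet b i) (interior (convexHull ℝ (range b')))) :
    ∃ κ ≠ 0, ∀ d, (b'.coord i').linear d = κ * (b.coord i).linear d := by
  have hker : ∀ v, (b.coord i).linear v = 0 → (b'.coord i').linear v ≤ 0 := by
    intro v hv
    by_contra! hpos
    have hcont : Tendsto (fun s : ℝ => y + s • v) (𝓝 0) (𝓝 y) :=
      Continuous.tendsto' (by fun_prop) 0 y (by simp)
    obtain ⟨s, hin, hfacet⟩ := ((eventually_mem_interior_convexHull (a := 0)
      (by simpa using hy') hpos).and
      ((hcont.eventually (eventually_coord_pos_of_mem_openFacet hy)).filter_mono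
        nhdsWithin_le_nhds)).exists
    refine hdisj.notMem_of_mem_left ⟨?_, hfacet⟩ hin
    rw [coord_add_smul, hy.1, hv, mul_zero, add_zero]
  obtain ⟨w, hw⟩ := exists_coord_linear_pos hy
  obtain ⟨w', hw'⟩ := exists_coord_linear_pos hy'
  have hmul : ∀ d, (b'.coord i').linear d =
      (b'.coord i').linear w / (b.coord i).linear w * (b.coord i).linear d := by
    intro d
    set c := (b.coord i).linear d / (b.coord i).linear w with hc
    have hv : (b.coord i).linear (d - c • w) = 0 := by
      rw [map_sub, map_smul, smul_eq_mul, hc, div_mul_cancel₀ _ hw.ne', sub_self]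
    have h₁ := hker _ hv
    have h₂ := hker (-(d - c • w)) (by rw [map_neg, hv, neg_zero])
    rw [map_neg] at h₂
    have h₀ : (b'.coord i').linear (d - c • w) = 0 := by linarith
    rw [map_sub, map_smul, smul_eq_mul, sub_eq_zero] at h₀
    rw [h₀, hc]
    ring
  refine ⟨_, fun h => ?_, hmul⟩
  rw [hmul, h, zero_mul] at hw'
  exact hw'.false

theorem mem_interior_union_of_neg {b : AffineBasis ι ℝ E} {b' : AffineBasis ι' ℝ E} {i : ι}
    {i' : ι'} {y : E} (hy : y ∈ openFacet b i) (hy' : y ∈ openFacet b' i') {κ : ℝ} (hκ : κ < 0)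
    (hmul : ∀ d, (b'.coord i').linear d = κ * (b.coord i).linear d) :
    y ∈ interior (convexHull ℝ (range b) ∪ convexHull ℝ (range b')) := by
  rw [mem_interior_iff_mem_nhds]
  filter_upwards [eventually_coord_pos_of_mem_openFacet hy,
    eventually_coord_pos_of_mem_openFacet hy'] with z hz hz'
  have hzi := coord_add b i y (z - y)
  have hzi' := coord_add b' i' y (z - y)
  rw [add_sub_cancel, hy.1, zero_add] at hzi
  rw [add_sub_cancel, hy'.1, zero_add, hmul, ← hzi] at hzi'
  rw [b.convexHull_eq_nonneg_coord, b'.convexHull_eq_nonneg_coord]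
  rcases le_total 0 (b.coord i z) with hside | hside
  · refine Or.inl fun j => ?_
    by_cases hj : j = i
    · exact hj ▸ hside
    · exact (hz j hj).le
  · refine Or.inr fun j => ?_
    by_cases hj : j = i'
    · rw [hj, hzi']
      exact mul_nonneg_of_nonpos_of_nonpos hκ.le hside
    · exact (hz' j hj).le

theorem coord_linear_pos_of_notMem_interior_union {b : AffineBasis ι ℝ E}
    {b' : AffineBasis ι' ℝ E} {i : ι} {i' : ι'} {y : E} (hy : y ∈ openFacet b i)
    (hy' : y ∈ openFacet b' i')
    (hdisj : Disjoint (openFacet b i) (interior (convexHull ℝ (range b'))))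
    (hint : y ∉ interior (convexHull ℝ (range b) ∪ convexHull ℝ (range b'))) {d : E}
    (hd : 0 < (b'.coord i').linear d) : 0 < (b.coord i).linear d := by
  obtain ⟨κ, hκ, hmul⟩ := exists_coord_linear_eq_mul hy hy' hdisj
  rcases hκ.lt_or_gt with hneg | hpos
  · exact absurd (mem_interior_union_of_neg hy hy' hneg hmul) hint
  · exact pos_of_mul_pos_right (hmul d ▸ hd) hpos.le

/-- Two simplices with a common facet and disjoint interiors lie on opposite sides of it. -/
theorem exists_neg_coord_linear_eq_mul {b : AffineBasis ι ℝ E} {b' : AffineBasis ι' ℝ E} {i : ι}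
    {i' : ι'} {y : E} (hy : y ∈ openFacet b i) (hfacet : openFacet b i ⊆ openFacet b' i')
    (hdisj : Disjoint (interior (convexHull ℝ (range b))) (interior (convexHull ℝ (range b')))) :
    ∃ κ < 0, ∀ d, (b'.coord i').linear d = κ * (b.coord i).linear d := by
  have hdisj' : Disjoint (openFacet b i) (interior (convexHull ℝ (range b'))) := by
    refine disjoint_left.2 fun z hz hz' => ?_
    rw [b'.interior_convexHull] at hz'
    exact (hz' i').ne' (hfacet hz).1
  obtain ⟨κ, hκ, hmul⟩ := exists_coord_linear_eq_mul hy (hfacet hy) hdisj'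
  refine ⟨κ, hκ.lt_or_gt.resolve_right fun hpos => ?_, hmul⟩
  obtain ⟨d, hd⟩ := exists_coord_linear_pos hy
  obtain ⟨s, hs, hs'⟩ := ((eventually_mem_interior_convexHull (a := 0) (by simpa using hy) hd).and
    (eventually_mem_interior_convexHull (by simpa using hfacet hy)
      (hmul d ▸ mul_pos hpos hd))).exists
  exact disjoint_left.1 hdisj hs hs'

end Facets

section PlaneMeasure

theorem lintegral_comp_mul_add {α : ℝ} (hα : α ≠ 0) (β : ℝ) (f : ℝ → ℝ≥0∞) :
    ∫⁻ r, f (α * r + β) = ENNReal.ofReal |α|⁻¹ * ∫⁻ r, f r := by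
  have hmap := (Homeomorph.mulLeft₀ α hα).toMeasurableEquiv.measurableEmbedding.lintegral_map
    (μ := volume) fun r => f (r + β)
  rw [← abs_inv, ← lintegral_add_right_eq_self f β, ← smul_eq_mul, ← lintegral_smul_measure,
    ← Real.map_volume_mul_left hα]
  exact hmap.symm

theorem lintegral_comp_add_linearMap {E : Type*} [NormedAddCommGroup E] [NormedSpace ℝ E]
    [MeasurableSpace E] [BorelSpace E] [FiniteDimensional ℝ E] (μ : Measure E)
    [μ.IsAddHaarMeasure] {L : E →ₗ[ℝ] E} (hL : LinearMap.det L ≠ 0) (x : E) {F : E → ℝ≥0∞}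
    (hF : Measurable F) :
    ∫⁻ v, F (x + L v) ∂μ = ENNReal.ofReal |LinearMap.det L|⁻¹ * ∫⁻ v, F v ∂μ := by
  have hmap : ∫⁻ v, F (x + L v) ∂μ = ∫⁻ v, F (x + v) ∂(μ.map L) :=
    (lintegral_map (hF.comp (measurable_const_add x))
      L.continuous_of_finiteDimensional.measurable).symm
  rw [hmap, Measure.map_linearMap_addHaar_eq_smul_addHaar μ hL, lintegral_smul_measure,
    lintegral_add_left_eq_self, smul_eq_mul, abs_inv]

/-- The determinant of the pair `(v, w)` of plane vectors. -/
def wedge (v w : Pt) : ℝ := v 0 * w 1 - v 1 * w 0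

theorem exists_eq_smul_of_wedge_eq_zero {v w : Pt} (hv : v ≠ 0) (h : wedge v w = 0) :
    ∃ c : ℝ, w = c • v := by
  unfold wedge at h
  by_cases h₀ : v 0 = 0
  · have h₁ : v 1 ≠ 0 := fun h₁ => hv (by ext i; fin_cases i <;> simp [h₀, h₁])
    refine ⟨w 1 / v 1, ?_⟩
    ext i; fin_cases i <;> simp <;> field_simp
    linarith
  · refine ⟨w 0 / v 0, ?_⟩
    ext i; fin_cases i <;> simp <;> field_simp
    linarith

theorem abs_wedge_le (v w : Pt) : |wedge v w| ≤ ‖v‖ * ‖w‖ := by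
  refine abs_le_of_sq_le_sq ?_ (by positivity)
  rw [mul_pow, EuclideanSpace.real_norm_sq_eq, EuclideanSpace.real_norm_sq_eq]
  simp only [Fin.sum_univ_two, wedge]
  nlinarith [sq_nonneg (v 0 * w 0 + v 1 * w 1)]

theorem lintegral_lintegral_add_smul_add_smul {τ d : Pt} (h : wedge τ d ≠ 0) (x : Pt)
    {F : Pt → ℝ≥0∞} (hF : Measurable F) :
    ∫⁻ r : ℝ, ∫⁻ s : ℝ, F (x + r • τ + s • d) = ENNReal.ofReal |wedge τ d|⁻¹ * ∫⁻ y, F y := by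
  set b := (EuclideanSpace.basisFun (Fin 2) ℝ).toBasis with hb
  set L : Pt →ₗ[ℝ] Pt := Matrix.toLin b b !![τ 0, d 0; τ 1, d 1] with hL
  have hdet : LinearMap.det L = wedge τ d := by
    rw [hL, LinearMap.det_toLin, Matrix.det_fin_two_of, wedge]
    ring
  have hLv (v : Pt) : L v = v 0 • τ + v 1 • d := by
    ext k
    rw [hL, Matrix.toLin_apply]
    fin_cases k <;> simp [hb, Matrix.mulVec, dotProduct, Fin.sum_univ_two] <;> ring
  have hcoord : MeasurePreserving
      (MeasurableEquiv.finTwoArrow ∘ (MeasurableEquiv.toLp 2 (Fin 2 → ℝ)).symm) :=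
    (volume_preserving_finTwoArrow ℝ).comp
      (EuclideanSpace.volume_preserving_symm_measurableEquiv_toLp (Fin 2))
  have hG : Measurable fun p : ℝ × ℝ => F (x + p.1 • τ + p.2 • d) := hF.comp (by fun_prop)
  rw [← hdet, ← lintegral_comp_add_linearMap volume (hdet ▸ h) x hF,
    ← lintegral_prod _ hG.aemeasurable, ← Measure.volume_eq_prod, ← hcoord.lintegral_comp hG]
  refine lintegral_congr fun v => ?_
  rw [hLv, ← add_assoc]
  rfl

theorem ae_forall_add_smul_add_smul_notMem {τ d : Pt} (h : wedge τ d ≠ 0) (x : Pt) {s : Set Pt}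
    (hs : s.Countable) : ∀ᵐ a : ℝ, ∀ b : ℝ, x + a • τ + b • d ∉ s := by
  filter_upwards [(hs.image fun p => wedge (p - x) d / wedge τ d).ae_notMem volume] with a ha b hb
  refine ha ⟨_, hb, ?_⟩
  rw [div_eq_iff h]
  simp only [wedge, PiLp.add_apply, PiLp.sub_apply, PiLp.smul_apply, smul_eq_mul]
  ring

theorem measurableEmbedding_lineMap {E : Type*} [NormedAddCommGroup E] [NormedSpace ℝ E]
    [MeasurableSpace E] [BorelSpace E] {p q : E} (hpq : p ≠ q) :
    MeasurableEmbedding (AffineMap.lineMap p q : ℝ →ᵃ[ℝ] E) :=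
  (AffineMap.lineMap p q : ℝ →ᵃ[ℝ] E).continuous_of_finiteDimensional.measurableEmbedding
    (AffineMap.lineMap_injective ℝ hpq)

theorem measurableSet_openSegment {E : Type*} [NormedAddCommGroup E] [NormedSpace ℝ E]
    [MeasurableSpace E] [BorelSpace E] {p q : E} (hpq : p ≠ q) :
    MeasurableSet (openSegment ℝ p q) := by
  rw [openSegment_eq_image_lineMap]
  exact (measurableEmbedding_lineMap hpq).measurableSet_image.2 measurableSet_Ioo

theorem setLIntegral_openSegment {E : Type*} [NormedAddCommGroup E] [NormedSpace ℝ E]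
    [MeasurableSpace E] [BorelSpace E] {p q : E} (hpq : p ≠ q) (f : E → ℝ≥0∞) :
    ∫⁻ z in openSegment ℝ p q, f z ∂μH[1] =
      ENNReal.ofReal ‖q - p‖ * ∫⁻ σ in Ioo (0 : ℝ) 1, f (p + σ • (q - p)) := by
  set e : ℝ → E := ⇑(AffineMap.lineMap p q : ℝ →ᵃ[ℝ] E) with he
  have hemb : MeasurableEmbedding e := measurableEmbedding_lineMap hpq
  have hrange : openSegment ℝ p q = e '' Ioo 0 1 := openSegment_eq_image_lineMap ℝ p q
  have hmeas : (μH[1] : Measure E).restrict (openSegment ℝ p q) =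
      ENNReal.ofReal ‖q - p‖ • (volume.restrict (Ioo (0 : ℝ) 1)).map e := by
    ext A hA
    rw [Measure.restrict_apply hA, Measure.smul_apply, Measure.map_apply hemb.measurable hA,
      Measure.restrict_apply (hemb.measurable hA), hrange, ← image_preimage_inter, he,
      hausdorffMeasure_lineMap_image, hausdorffMeasure_real, ENNReal.smul_def,
      smul_eq_mul, smul_eq_mul, ← edist_nndist, edist_dist, dist_comm, dist_eq_norm]
  rw [hmeas, lintegral_smul_measure, hemb.lintegral_map, smul_eq_mul]
  simp only [he, AffineMap.lineMap_apply, vsub_eq_sub, vadd_eq_add, add_comm]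

theorem continuousOn_comp_openSegment {E F : Type*} [NormedAddCommGroup E] [NormedSpace ℝ E]
    [TopologicalSpace F] {p q : E} {g : E → F}
    (hg : ContinuousOn g (openSegment ℝ p q)) :
    ContinuousOn (fun σ : ℝ => g (p + σ • (q - p))) (Ioo 0 1) :=
  hg.comp (by fun_prop) fun σ hσ => openSegment_eq_image' ℝ p q ▸ mem_image_of_mem _ hσ

/-- The value of `g` at the point where the line through `y` with direction `d` crosses the open
segment from `p` to `q`, and zero when there is no such point or the two are parallel. -/
def crossing (p q d : Pt) (g : Pt → ℝ≥0∞) (y : Pt) : ℝ≥0∞ :=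
  (Ioo (0 : ℝ) 1).indicator (fun σ => g (p + σ • (q - p))) (wedge (y - p) d / wedge (q - p) d)

theorem crossing_eq {p q d y : Pt} (g : Pt → ℝ≥0∞) (h : wedge (q - p) d ≠ 0) {s : ℝ}
    (hs : y + s • d ∈ openSegment ℝ p q) : crossing p q d g y = g (y + s • d) := by
  rw [openSegment_eq_image'] at hs
  obtain ⟨σ, hσ, heq⟩ := hs
  have hy : y = p + σ • (q - p) - s • d := eq_sub_of_add_eq heq.symm
  have hparam : wedge (y - p) d / wedge (q - p) d = σ := by
    rw [div_eq_iff h, hy]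
    simp only [wedge, PiLp.add_apply, PiLp.sub_apply, PiLp.smul_apply, smul_eq_mul]
    ring
  rw [crossing, hparam, indicator_of_mem hσ]
  exact congrArg g heq

theorem measurable_crossing {p q : Pt} (d : Pt) {g : Pt → ℝ≥0∞}
    (hg : ContinuousOn g (openSegment ℝ p q)) : Measurable (crossing p q d g) := by
  have hind : Measurable ((Ioo (0 : ℝ) 1).indicator fun σ => g (p + σ • (q - p))) := by
    rw [← piecewise_eq_indicator]
    exact (continuousOn_comp_openSegment hg).measurable_piecewise continuousOn_const
      measurableSet_Ioo
  refine hind.comp ?_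
  unfold wedge
  fun_prop

theorem lintegral_crossing_le {p q d τ : Pt} (h : wedge τ d ≠ 0) (hpq : p ≠ q) (x : Pt)
    (g : Pt → ℝ≥0∞) :
    ∫⁻ r : ℝ, crossing p q d g (x + r • τ) ≤
      ENNReal.ofReal (‖d‖ / |wedge τ d|) * ∫⁻ z in openSegment ℝ p q, g z ∂μH[1] := by
  by_cases hpar : wedge (q - p) d = 0
  · simp [crossing, hpar]
  have hparam (r : ℝ) : wedge (x + r • τ - p) d / wedge (q - p) d =
      wedge τ d / wedge (q - p) d * r + wedge (x - p) d / wedge (q - p) d := by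
    simp only [wedge, PiLp.add_apply, PiLp.sub_apply, PiLp.smul_apply, smul_eq_mul]
    ring
  simp only [crossing, hparam]
  rw [lintegral_comp_mul_add (div_ne_zero h hpar), lintegral_indicator measurableSet_Ioo,
    setLIntegral_openSegment hpq, ← mul_assoc, ← ENNReal.ofReal_mul (by positivity), abs_div,
    inv_div, div_mul_eq_mul_div, mul_comm ‖d‖]
  gcongr
  exact abs_wedge_le _ _

end PlaneMeasure

namespace Tri

theorem sum_fin_three {M : Type*} [AddCommMonoid M] (f : Fin 3 → M) (i : Fin 3) :
    ∑ j, f j = f i + f (i + 1) + f (i + 2) := by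
  rw [← Equiv.sum_comp (Equiv.addLeft i), Fin.sum_univ_three]
  simp

/-- The vertices `A`, `B`, `C`, indexed by `Fin 3`. -/
def vertex (t : Tri) : Fin 3 → Pt := ![t.A, t.B, t.C]

/-- The edge opposite to the `i`-th vertex, oriented as in `Tri.edgeList`. -/
def edge (t : Tri) (i : Fin 3) : Pt × Pt := (t.vertex (i + 1), t.vertex (i + 2))

/-- The `i`-th edge without its end points. -/
abbrev openEdge (t : Tri) (i : Fin 3) : Set Pt := openSegment ℝ (t.edge i).1 (t.edge i).2

/-- The length of the `i`-th edge. -/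
abbrev edgeLength (t : Tri) (i : Fin 3) : ℝ := ‖(t.edge i).2 - (t.edge i).1‖

theorem mem_edgeList_iff (t : Tri) {e : Pt × Pt} : e ∈ t.edgeList ↔ ∃ i, e = t.edge i := by
  simp only [edgeList, List.mem_cons, List.not_mem_nil, or_false, Fin.exists_fin_succ]
  simp [edge, vertex]
  tauto

theorem sum_map_edgeList {M : Type*} [AddCommMonoid M] (t : Tri) (f : Pt × Pt → M) :
    (t.edgeList.map f).sum = ∑ i, f (t.edge i) := by
  rw [sum_fin_three _ 2]
  simp [edgeList, edge, vertex, add_assoc]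

theorem range_vertex (t : Tri) : range t.vertex = {t.A, t.B, t.C} := by
  simp only [vertex, Matrix.range_cons, Matrix.range_empty, union_empty, singleton_union]

theorem vertex_mem_closedHull (t : Tri) (i : Fin 3) : t.vertex i ∈ t.closedHull :=
  subset_convexHull _ _ (t.range_vertex ▸ mem_range_self i)

theorem isOpen_openHull (t : Tri) : IsOpen t.openHull := isOpen_interior

theorem isCompact_closedHull (t : Tri) : IsCompact t.closedHull :=
  (toFinite _).isCompact_convexHull ℝ

theorem abs_wedge_vertex_sub (t : Tri) (σ : Equiv.Perm (Fin 3)) :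
    |wedge (t.vertex (σ 1) - t.vertex (σ 0)) (t.vertex (σ 2) - t.vertex (σ 0))| = |t.cross| := by
  have h₁ : σ 0 ≠ σ 1 := by simp
  have h₂ : σ 0 ≠ σ 2 := by simp
  have h₃ : σ 1 ≠ σ 2 := by simp
  rw [abs_eq_abs, wedge, cross]
  generalize σ 0 = i at *
  generalize σ 1 = j at *
  generalize σ 2 = k at *
  fin_cases i <;> fin_cases j <;> fin_cases k <;> first | contradiction | skip
  all_goals
    simp only [vertex, Fin.zero_eta, Fin.mk_one, Fin.reduceFinMk, Matrix.cons_val, PiLp.sub_apply]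
    first | exact Or.inl trivial | exact Or.inl (by ring1) | exact Or.inr (by ring1)

namespace Nondeg

variable {t : Tri}

theorem affineIndependent (h : t.Nondeg) : AffineIndependent ℝ t.vertex := by
  rw [vertex, affineIndependent_iff_not_collinear_set]
  intro hcol
  obtain ⟨v, hv⟩ := (collinear_iff_of_mem (mem_insert t.A _)).1 hcol
  obtain ⟨r, hr⟩ := hv t.B (by simp)
  obtain ⟨s, hs⟩ := hv t.C (by simp)
  refine h ?_
  simp only [cross, hr, hs, vadd_eq_add, PiLp.add_apply, PiLp.smul_apply, smul_eq_mul]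
  ring

/-- The vertices of a non-degenerate triangle as an affine basis of the plane; its coordinates are
the barycentric coordinates. -/
def basis (h : t.Nondeg) : AffineBasis (Fin 3) ℝ Pt where
  toFun := t.vertex
  ind' := h.affineIndependent
  tot' := by
    rw [h.affineIndependent.affineSpan_eq_top_iff_card_eq_finrank_add_one]
    simp

theorem basis_apply (h : t.Nondeg) (i : Fin 3) : h.basis i = t.vertex i := rfl

theorem convexHull_range_basis (h : t.Nondeg) : convexHull ℝ (range h.basis) = t.closedHull :=
  congrArg _ t.range_vertex

theorem interior_convexHull_range_basis (h : t.Nondeg) :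
    interior (convexHull ℝ (range h.basis)) = t.openHull :=
  congrArg _ h.convexHull_range_basis

theorem eq_add_of_coord_eq_zero (h : t.Nondeg) {i : Fin 3} {y : Pt} (hy : h.basis.coord i y = 0) :
    h.basis.coord (i + 1) y + h.basis.coord (i + 2) y = 1 ∧
      h.basis.coord (i + 1) y • (t.edge i).1 + h.basis.coord (i + 2) y • (t.edge i).2 = y := by
  have hsum := h.basis.sum_coord_apply_eq_one y
  have heq := h.basis.linear_combination_coord_eq_self y
  rw [sum_fin_three _ i, hy] at hsum heq
  rw [zero_add] at hsum
  rw [zero_smul, zero_add] at heq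
  exact ⟨hsum, heq⟩

theorem openFacet_basis (h : t.Nondeg) (i : Fin 3) : openFacet h.basis i = t.openEdge i := by
  ext y
  constructor
  · intro hy
    obtain ⟨hsum, heq⟩ := h.eq_add_of_coord_eq_zero hy.1
    exact ⟨_, _, hy.2 (i + 1) (by simp), hy.2 (i + 2) (by simp), hsum, heq⟩
  · rw [openEdge, openSegment_eq_image_lineMap]
    rintro ⟨s, hs, rfl⟩
    have hcoord (j : Fin 3) : h.basis.coord j (AffineMap.lineMap (t.edge i).1 (t.edge i).2 s) =
        AffineMap.lineMap (if j = i + 1 then 1 else 0) (if j = i + 2 then 1 else 0) s := by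
      rw [AffineMap.apply_lineMap, edge, ← h.basis_apply, ← h.basis_apply, h.basis.coord_apply,
        h.basis.coord_apply]
    refine ⟨by rw [hcoord]; simp, fun j hj => ?_⟩
    rw [hcoord]
    obtain rfl | rfl : j = i + 1 ∨ j = i + 2 := by omega
    · simpa [AffineMap.lineMap_apply] using hs.2
    · simpa [AffineMap.lineMap_apply] using hs.1

theorem exists_mem_openEdge (h : t.Nondeg) {y : Pt} (hy : y ∈ t.closedHull)
    (hint : y ∉ t.openHull) (hv : ∀ i, y ≠ t.vertex i) :
    ∃ i, y ∈ t.openEdge i := by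
  rw [← h.convexHull_range_basis, h.basis.convexHull_eq_nonneg_coord] at hy
  rw [← h.interior_convexHull_range_basis, h.basis.interior_convexHull] at hint
  simp only [mem_ofPred_eq, not_forall, not_lt] at hint
  obtain ⟨i, hi⟩ := hint
  obtain ⟨hsum, heq⟩ := h.eq_add_of_coord_eq_zero (hi.antisymm (hy i))
  exact ⟨i, mem_openSegment_of_ne_left_right (hv (i + 1)).symm (hv (i + 2)).symm
    ⟨_, _, hy (i + 1), hy (i + 2), hsum, heq⟩⟩

theorem edge_fst_ne_snd (h : t.Nondeg) (i : Fin 3) : (t.edge i).1 ≠ (t.edge i).2 :=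
  fun heq => by simpa using h.affineIndependent.injective (a₁ := i + 1) (a₂ := i + 2) heq

theorem wedge_edge_ne_zero (h : t.Nondeg) {i : Fin 3} {d : Pt}
    (hd : (h.basis.coord i).linear d ≠ 0) : wedge ((t.edge i).2 - (t.edge i).1) d ≠ 0 := by
  intro hw
  obtain ⟨c, rfl⟩ :=
    exists_eq_smul_of_wedge_eq_zero (sub_ne_zero.2 (h.edge_fst_ne_snd i).symm) hw
  refine hd ?_
  rw [map_smul, ← vsub_eq_sub, AffineMap.linearMap_vsub, edge, ← h.basis_apply, ← h.basis_apply,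
    h.basis.coord_apply, h.basis.coord_apply]
  simp

theorem openHull_nonempty (h : t.Nondeg) : t.openHull.Nonempty :=
  h.interior_convexHull_range_basis ▸ ⟨_, h.basis.centroid_mem_interior_convexHull⟩

theorem closure_openHull (h : t.Nondeg) : closure t.openHull = t.closedHull := by
  have hconv : Convex ℝ t.closedHull := convex_convexHull ℝ _
  exact (hconv.closure_interior_eq_closure_of_nonempty_interior h.openHull_nonempty).trans
    t.isCompact_closedHull.isClosed.closure_eq

theorem shapeReg_mul (h : t.Nondeg) :
    t.shapeReg * (2 * |t.cross| ^ 2) = t.la * t.lb * t.lc * (t.la + t.lb + t.lc) := by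
  have hc : 0 < |t.cross| := abs_pos.2 h
  have hA : t.A ≠ t.B := h.edge_fst_ne_snd 2
  have hlen : 0 < t.la + t.lb + t.lc :=
    add_pos_of_nonneg_of_pos (add_nonneg dist_nonneg dist_nonneg) (dist_pos.2 hA)
  rw [shapeReg, circumradius, inradius, area]
  field_simp
  ring

theorem sq_norm_edge_le (h : t.Nondeg) {K : ℝ} (hK : t.shapeReg ≤ K) (i : Fin 3) :
    t.edgeLength i ^ 2 ≤ 2 * K * |t.cross| := by
  set ℓ : Fin 3 → ℝ := fun j => ‖(t.edge j).2 - (t.edge j).1‖ with hℓ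
  have hc : 0 < |t.cross| := abs_pos.2 h
  have hcross : |t.cross| ≤ ℓ (i + 1) * ℓ (i + 2) := by
    rw [← t.abs_wedge_vertex_sub (Equiv.addLeft i), mul_comm, hℓ]
    refine (abs_wedge_le _ _).trans (le_of_eq ?_)
    rw [norm_sub_rev (t.vertex (Equiv.addLeft i 2))]
    simp [edge, add_assoc]
  have hreg : t.shapeReg * (2 * |t.cross| ^ 2) =
      ℓ i * ℓ (i + 1) * ℓ (i + 2) * (ℓ i + ℓ (i + 1) + ℓ (i + 2)) := by
    have ha : t.la = ℓ 0 := (dist_comm _ _).trans (dist_eq_norm _ _)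
    have hb : t.lb = ℓ 1 := dist_eq_norm _ _
    have hc : t.lc = ℓ 2 := (dist_comm _ _).trans (dist_eq_norm _ _)
    rw [h.shapeReg_mul, ha, hb, hc]
    fin_cases i <;> simp <;> ring
  have h0 (j : Fin 3) : 0 ≤ ℓ j := norm_nonneg _
  refine le_of_mul_le_mul_left (a := |t.cross|) ?_ hc
  calc |t.cross| * ℓ i ^ 2 ≤ ℓ (i + 1) * ℓ (i + 2) * ℓ i ^ 2 := by gcongr
    _ ≤ ℓ (i + 1) * ℓ (i + 2) * (ℓ i * (ℓ i + ℓ (i + 1) + ℓ (i + 2))) := by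
      gcongr
      nlinarith [h0 i, h0 (i + 1), h0 (i + 2)]
    _ = t.shapeReg * (2 * |t.cross| ^ 2) := by rw [hreg]; ring
    _ ≤ K * (2 * |t.cross| ^ 2) := by gcongr
    _ = |t.cross| * (2 * K * |t.cross|) := by ring

end Nondeg

/-- A permutation `σ` of the vertices singles out the half of the edge from `vertex (σ 0)` to
`vertex (σ 1)` which is next to the former; `halfEdge` is the vector along this half. -/
def halfEdge (t : Tri) (σ : Equiv.Perm (Fin 3)) : Pt :=
  (1 / 2 : ℝ) • (t.vertex (σ 1) - t.vertex (σ 0))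

/-- The direction from `vertex (σ 0)` to the opposite vertex, scaled so that the parallelogram it
spans with `halfEdge` lies in the triangle. -/
def inward (t : Tri) (σ : Equiv.Perm (Fin 3)) : Pt :=
  (1 / 2 : ℝ) • (t.vertex (σ 2) - t.vertex (σ 0))

/-- The open half edge determined by `σ`. -/
def halfSegment (t : Tri) (σ : Equiv.Perm (Fin 3)) : Set Pt :=
  openSegment ℝ (t.vertex (σ 0)) (t.vertex (σ 0) + t.halfEdge σ)

theorem vertex_add_halfEdge (t : Tri) (σ : Equiv.Perm (Fin 3)) :
    t.vertex (σ 0) + t.halfEdge σ = midpoint ℝ (t.vertex (σ 0)) (t.vertex (σ 1)) := by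
  rw [halfEdge, midpoint_eq_smul_add, invOf_eq_inv, ← one_div]
  module

theorem exists_openEdge_subset_halfSegment_union (t : Tri) (i : Fin 3) :
    ∃ σ σ' : Equiv.Perm (Fin 3), σ 2 = i ∧ σ' 2 = i ∧ t.openEdge i ⊆
      insert (midpoint ℝ (t.edge i).1 (t.edge i).2) (t.halfSegment σ ∪ t.halfSegment σ') := by
  refine ⟨Equiv.addLeft (i + 1), Equiv.subLeft (i + 2), ?_, ?_, ?_⟩
  · simp
  · simp
  · have hsub := openSegment_subset_union (𝕜 := ℝ) (t.edge i).1 (t.edge i).2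
      (z := midpoint ℝ (t.edge i).1 (t.edge i).2) ⟨_, rfl⟩
    rw [halfSegment, halfSegment, vertex_add_halfEdge, vertex_add_halfEdge]
    rw [openSegment_symm ℝ (midpoint _ _ _) (t.edge i).2] at hsub
    have hi : i + 2 - 1 = i + 1 := by fin_cases i <;> rfl
    simpa [openEdge, edge, hi, midpoint_comm (t.vertex (i + 2)) (t.vertex (i + 1))] using hsub

theorem abs_wedge_halfEdge_inward (t : Tri) (σ : Equiv.Perm (Fin 3)) :
    |wedge (t.halfEdge σ) (t.inward σ)| = |t.cross| / 4 := by
  have hscale : wedge (t.halfEdge σ) (t.inward σ) =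
      wedge (t.vertex (σ 1) - t.vertex (σ 0)) (t.vertex (σ 2) - t.vertex (σ 0)) / 4 := by
    simp only [wedge, halfEdge, inward, PiLp.smul_apply, smul_eq_mul]
    ring
  rw [hscale, abs_div, t.abs_wedge_vertex_sub]
  norm_num

namespace Nondeg

variable {t : Tri}

theorem coord_halfEdge_inward (h : t.Nondeg) (σ : Equiv.Perm (Fin 3)) (i : Fin 3) (r s : ℝ) :
    h.basis.coord (σ i) (t.vertex (σ 0) + r • t.halfEdge σ + s • t.inward σ) =
      ![1 - r / 2 - s / 2, r / 2, s / 2] i := by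
  have hlin (j : Fin 3) : (h.basis.coord (σ i)).linear (t.vertex (σ j) - t.vertex (σ 0)) =
      (if i = j then 1 else 0) - (if i = 0 then 1 else 0) := by
    rw [← vsub_eq_sub, AffineMap.linearMap_vsub, ← h.basis_apply, ← h.basis_apply,
      h.basis.coord_apply, h.basis.coord_apply]
    simp
  rw [coord_add_smul, coord_add_smul, halfEdge, inward, map_smul, map_smul, hlin, hlin,
    ← h.basis_apply, h.basis.coord_apply]
  fin_cases i <;> simp <;> ring

theorem add_halfEdge_mem_openFacet (h : t.Nondeg) (σ : Equiv.Perm (Fin 3)) {r : ℝ}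
    (hr : r ∈ Ioo (0 : ℝ) 1) : t.vertex (σ 0) + r • t.halfEdge σ ∈ openFacet h.basis (σ 2) := by
  have hcoord (i : Fin 3) := h.coord_halfEdge_inward σ i r 0
  simp only [zero_smul, add_zero, zero_div, sub_zero] at hcoord
  refine ⟨hcoord 2, σ.forall_congr_right.1 fun i hi => ?_⟩
  rw [hcoord]
  fin_cases i
  · exact show 0 < 1 - r / 2 by linarith [hr.2]
  · exact half_pos hr.1
  · exact absurd rfl hi

theorem add_halfEdge_add_inward_mem_openHull (h : t.Nondeg) (σ : Equiv.Perm (Fin 3)) {r s : ℝ}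
    (hr : r ∈ Ioo (0 : ℝ) 1) (hs : s ∈ Ioo (0 : ℝ) 1) :
    t.vertex (σ 0) + r • t.halfEdge σ + s • t.inward σ ∈ t.openHull := by
  rw [← h.interior_convexHull_range_basis, h.basis.interior_convexHull]
  refine σ.forall_congr_right.1 fun i => ?_
  rw [h.coord_halfEdge_inward]
  fin_cases i
  · exact show 0 < 1 - r / 2 - s / 2 by linarith [hr.2, hs.2]
  · exact half_pos hr.1
  · exact half_pos hs.1

theorem coord_linear_inward_pos (h : t.Nondeg) (σ : Equiv.Perm (Fin 3)) :
    0 < (h.basis.coord (σ 2)).linear (t.inward σ) := by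
  have h₀ := h.coord_halfEdge_inward σ 2 0 0
  have h₁ := h.coord_halfEdge_inward σ 2 0 1
  rw [coord_add_smul] at h₀ h₁
  simp only [Matrix.cons_val] at h₀ h₁
  linarith

theorem halfEdge_ne_zero (h : t.Nondeg) (σ : Equiv.Perm (Fin 3)) : t.halfEdge σ ≠ 0 := by
  rw [halfEdge, smul_ne_zero_iff, sub_ne_zero]
  exact ⟨by norm_num, h.affineIndependent.injective.ne (by simp)⟩

theorem wedge_halfEdge_inward_ne_zero (h : t.Nondeg) (σ : Equiv.Perm (Fin 3)) :
    wedge (t.halfEdge σ) (t.inward σ) ≠ 0 := by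
  rw [← abs_pos, t.abs_wedge_halfEdge_inward]
  exact div_pos (abs_pos.2 h) (by norm_num)

end Nondeg

end Tri

namespace Tri

/-- The `i`-th edge of `t` is one of the edges of `t'`. -/
def SharesEdge (t t' : Tri) (i : Fin 3) : Prop :=
  ∃ e' ∈ t'.edgeList, SameEdge (t.edge i) e'

/-- The `i`-th edge of `t` lies on the boundary of `Ω`. -/
def HasBoundaryEdge (t : Tri) (Ω : Set Pt) (i : Fin 3) : Prop :=
  segment ℝ (t.edge i).1 (t.edge i).2 ⊆ frontier Ω

theorem SharesEdge.exists_openEdge_eq {t t' : Tri} {i : Fin 3} (h : t.SharesEdge t' i) :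
    ∃ i', t.openEdge i = t'.openEdge i' := by
  obtain ⟨e', he', hsame⟩ := h
  obtain ⟨i', rfl⟩ := t'.mem_edgeList_iff.1 he'
  refine ⟨i', ?_⟩
  rcases hsame with h | h <;> rw [openEdge, openEdge, h]
  exact openSegment_symm ℝ _ _

theorem HasBoundaryEdge.openEdge_subset {t : Tri} {Ω : Set Pt} {i : Fin 3}
    (h : t.HasBoundaryEdge Ω i) : t.openEdge i ⊆ frontier Ω :=
  (openSegment_subset_segment ℝ _ _).trans h

end Tri

namespace Triangulation

variable {Ω : Set Pt}

theorem isOpen (T : Triangulation Ω) : IsOpen Ω := by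
  rw [T.cover]
  exact isOpen_interior

theorem notMem_of_mem_frontier (T : Triangulation Ω) {x : Pt} (hx : x ∈ frontier Ω) : x ∉ Ω := by
  rw [T.isOpen.frontier_eq] at hx
  exact hx.2

theorem openHull_subset (T : Triangulation Ω) {t : Tri} (ht : t ∈ T.tris) : t.openHull ⊆ Ω := by
  rw [T.cover]
  exact interior_mono (subset_biUnion_of_mem (u := Tri.closedHull) ht)

theorem closedHull_subset_closure (T : Triangulation Ω) {t : Tri} (ht : t ∈ T.tris) :
    t.closedHull ⊆ closure Ω := by
  rw [← (T.nondeg t ht).closure_openHull]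
  exact closure_mono (T.openHull_subset ht)

theorem closure_subset_iUnion_closedHull (T : Triangulation Ω) :
    closure Ω ⊆ ⋃ t ∈ T.tris, t.closedHull := by
  refine closure_minimal ?_
    (T.tris.finite_toSet.isClosed_biUnion fun t _ => t.isCompact_closedHull.isClosed)
  nth_rw 1 [T.cover]
  exact interior_subset

theorem interior_subset_of_subset_closure (T : Triangulation Ω) {s : Set Pt}
    (hs : s ⊆ closure Ω) : interior s ⊆ Ω := by
  rw [T.cover]
  exact interior_mono (hs.trans T.closure_subset_iUnion_closedHull)

theorem interior_hull_union_hull_subset {T T' : Triangulation Ω} {t t' : Tri}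
    (ht : t ∈ T.tris) (ht' : t' ∈ T'.tris) :
    interior (convexHull ℝ (range (T.nondeg t ht).basis) ∪
      convexHull ℝ (range (T'.nondeg t' ht').basis)) ⊆ Ω := by
  rw [(T.nondeg t ht).convexHull_range_basis, (T'.nondeg t' ht').convexHull_range_basis]
  exact T.interior_subset_of_subset_closure
    (union_subset (T.closedHull_subset_closure ht) (T'.closedHull_subset_closure ht'))

theorem exists_sharesEdge (T : Triangulation Ω) {t : Tri} (ht : t ∈ T.tris) {i : Fin 3}
    (hi : ¬ t.HasBoundaryEdge Ω i) : ∃ t' ∈ T.tris, t ≠ t' ∧ t.SharesEdge t' i := by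
  rcases T.conforming t ht (t.edge i) (t.mem_edgeList_iff.2 ⟨i, rfl⟩) with h | h
  · exact absurd h hi
  · obtain ⟨t', ht', hne, h⟩ := h
    exact ⟨t', ht', hne.symm, h⟩

theorem exists_neg_coord_linear_eq_mul_of_sharesEdge (T : Triangulation Ω) {t t' : Tri}
    (ht : t ∈ T.tris) (ht' : t' ∈ T.tris) (hne : t ≠ t') {i : Fin 3} (h : t.SharesEdge t' i)
    {y : Pt} (hy : y ∈ openFacet (T.nondeg t ht).basis i) :
    ∃ i', y ∈ openFacet (T.nondeg t' ht').basis i' ∧ ∃ κ < 0, ∀ d,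
      ((T.nondeg t' ht').basis.coord i').linear d =
        κ * ((T.nondeg t ht).basis.coord i).linear d := by
  obtain ⟨i', hi'⟩ := h.exists_openEdge_eq
  rw [← (T.nondeg t ht).openFacet_basis, ← (T.nondeg t' ht').openFacet_basis] at hi'
  refine ⟨i', hi' ▸ hy, exists_neg_coord_linear_eq_mul hy hi'.subset ?_⟩
  rw [(T.nondeg t ht).interior_convexHull_range_basis,
    (T.nondeg t' ht').interior_convexHull_range_basis, disjoint_iff_inter_eq_empty]
  exact T.disj t ht t' ht' hne

theorem openEdge_subset_of_not_hasBoundaryEdge (T : Triangulation Ω) {t : Tri}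
    (ht : t ∈ T.tris) {i : Fin 3} (hi : ¬ t.HasBoundaryEdge Ω i) :
    t.openEdge i ⊆ Ω := by
  intro y hy
  rw [← (T.nondeg t ht).openFacet_basis] at hy
  obtain ⟨t', ht', hne, hshare⟩ := T.exists_sharesEdge ht hi
  obtain ⟨i', hy', κ, hκ, hmul⟩ :=
    T.exists_neg_coord_linear_eq_mul_of_sharesEdge ht ht' hne hshare hy
  exact interior_hull_union_hull_subset ht ht' (mem_interior_union_of_neg hy hy' hκ hmul)

theorem exists_mem_openEdge_hasBoundaryEdge (T : Triangulation Ω) {x : Pt}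
    (hx : x ∈ frontier Ω) (hv : ∀ t ∈ T.tris, ∀ i, x ≠ t.vertex i) :
    ∃ t ∈ T.tris, ∃ i, t.HasBoundaryEdge Ω i ∧ x ∈ t.openEdge i := by
  obtain ⟨t, ht, hxt⟩ : ∃ t ∈ T.tris, x ∈ t.closedHull := by
    simpa using T.closure_subset_iUnion_closedHull (frontier_subset_closure hx)
  obtain ⟨i, hi⟩ := (T.nondeg t ht).exists_mem_openEdge hxt
    (fun h => T.notMem_of_mem_frontier hx (T.openHull_subset ht h)) (hv t ht)
  refine ⟨t, ht, i, ?_, hi⟩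
  by_contra hb
  exact T.notMem_of_mem_frontier hx (T.openEdge_subset_of_not_hasBoundaryEdge ht hb hi)

theorem exists_finite_frontier_subset (T : Triangulation Ω) :
    ∃ s : Set Pt, s.Finite ∧ frontier Ω ⊆ s ∪ ⋃ t ∈ T.tris,
      ⋃ σ ∈ {σ : Equiv.Perm (Fin 3) | t.HasBoundaryEdge Ω (σ 2)}, t.halfSegment σ := by
  refine ⟨⋃ t ∈ T.tris, (range t.vertex ∪ range fun i => midpoint ℝ (t.edge i).1 (t.edge i).2),
    T.tris.finite_toSet.biUnion fun t _ => (finite_range _).union (finite_range _), ?_⟩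
  intro x hx
  by_cases hv : ∃ t ∈ T.tris, x ∈ range t.vertex
  · obtain ⟨t, ht, hv⟩ := hv
    exact Or.inl (mem_biUnion (x := t) ht (Or.inl hv))
  push Not at hv
  obtain ⟨t, ht, i, hb, hi⟩ := T.exists_mem_openEdge_hasBoundaryEdge hx
    fun t ht i h => hv t ht ⟨i, h.symm⟩
  obtain ⟨σ, σ', rfl, hσ', hsub⟩ := t.exists_openEdge_subset_halfSegment_union i
  rcases hsub hi with hmid | hhalf | hhalf
  · exact Or.inl (mem_biUnion (x := t) ht (Or.inr ⟨_, hmid.symm⟩))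
  · exact Or.inr (mem_biUnion (x := t) ht (mem_biUnion (x := σ) hb hhalf))
  · rw [← hσ'] at hb
    exact Or.inr (mem_biUnion (x := t) ht (mem_biUnion (x := σ') hb hhalf))

/-- Both triangulations lie on the same side of a common boundary point. -/
theorem coord_linear_pos_of_hasBoundaryEdge {T T' : Triangulation Ω} {t t' : Tri}
    (ht : t ∈ T.tris) (ht' : t' ∈ T'.tris) {i i' : Fin 3} (hb : t.HasBoundaryEdge Ω i) {y d : Pt}
    (hy : y ∈ openFacet (T.nondeg t ht).basis i)
    (hy' : y ∈ openFacet (T'.nondeg t' ht').basis i')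
    (hd : 0 < ((T'.nondeg t' ht').basis.coord i').linear d) :
    0 < ((T.nondeg t ht).basis.coord i).linear d := by
  have hfrontier : openFacet (T.nondeg t ht).basis i ⊆ frontier Ω := by
    rw [(T.nondeg t ht).openFacet_basis]
    exact hb.openEdge_subset
  refine coord_linear_pos_of_notMem_interior_union hy hy' ?_ ?_ hd
  · rw [(T'.nondeg t' ht').interior_convexHull_range_basis]
    exact disjoint_left.2 fun z hz hz' =>
      T.notMem_of_mem_frontier (hfrontier hz) (T'.openHull_subset ht' hz')
  · exact fun h => T.notMem_of_mem_frontier (hfrontier hy)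
      (interior_hull_union_hull_subset ht ht' h)

theorem exists_next_of_eventually_mem (T : Triangulation Ω) {t : Tri} (ht : t ∈ T.tris)
    {y d : Pt} {b : ℝ} (hmem : y + b • d ∈ Ω) (hfr : y + b • d ∈ frontier t.openHull)
    (hv : ∀ i, y + b • d ≠ t.vertex i) (hleft : ∀ᶠ s in 𝓝[<] b, y + s • d ∈ t.openHull) :
    ∃ i, wedge ((t.edge i).2 - (t.edge i).1) d ≠ 0 ∧
      y + b • d ∈ t.openEdge i ∧
      ∃ t' ∈ T.tris, t ≠ t' ∧ t.SharesEdge t' i ∧ y + b • d ∉ t'.openHull ∧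
        ∀ᶠ s in 𝓝[>] b, y + s • d ∈ t'.openHull := by
  have h := T.nondeg t ht
  have hopen : IsOpen t.openHull := t.isOpen_openHull
  rw [hopen.frontier_eq, h.closure_openHull] at hfr
  obtain ⟨i, hi⟩ := h.exists_mem_openEdge hfr.1 hfr.2 hv
  have hfacet : y + b • d ∈ openFacet h.basis i := (h.openFacet_basis i).symm ▸ hi
  have hneg : (h.basis.coord i).linear d < 0 :=
    coord_linear_neg_of_eventually_mem_interior hfacet
      (h.interior_convexHull_range_basis.symm ▸ hleft)
  obtain ⟨t', ht', hne, hshare⟩ := T.exists_sharesEdge ht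
    fun hb => T.notMem_of_mem_frontier (hb.openEdge_subset hi) hmem
  obtain ⟨i', hfacet', κ, hκ, hmul⟩ :=
    T.exists_neg_coord_linear_eq_mul_of_sharesEdge ht ht' hne hshare hfacet
  have hright := eventually_mem_interior_convexHull hfacet' (hmul d ▸ mul_pos_of_neg_of_neg hκ hneg)
  have hnot : y + b • d ∉ interior (convexHull ℝ (range (T.nondeg t' ht').basis)) := by
    rw [(T.nondeg t' ht').basis.interior_convexHull]
    exact fun hpos => (hpos i').ne' hfacet'.1
  rw [(T.nondeg t' ht').interior_convexHull_range_basis] at hright hnot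
  exact ⟨i, h.wedge_edge_ne_zero hneg.ne, hi, t', ht', hne, hshare, hnot, hright⟩

end Triangulation

section LocalTrace

theorem measurable_indicator_h1Density {E : Type*} [NormedAddCommGroup E] [NormedSpace ℝ E]
    [MeasurableSpace E] [OpensMeasurableSpace E] {U : Set E} (hU : IsOpen U) {u : E → ℝ}
    (hc : ContinuousOn u U) (D : ℝ) : Measurable (U.indicator (h1Density D u)) := by
  have hm : Measurable (U.piecewise u 0) :=
    hc.measurable_piecewise continuousOn_const hU.measurableSet
  have heq : U.indicator (h1Density D u) = U.indicator fun x =>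
      ENNReal.ofReal (2 * U.piecewise u 0 x ^ 2 + D ^ 2 * ‖fderiv ℝ u x‖ ^ 2) :=
    indicator_congr fun x hx => by rw [h1Density, piecewise_eq_of_mem _ _ _ hx]
  rw [heq]
  have := (measurable_fderiv ℝ u).norm
  exact Measurable.indicator (by fun_prop) hU.measurableSet

theorem setLIntegral_parallelogram_h1Density_le {U : Set Pt} (hU : IsOpen U) {u : Pt → ℝ}
    (hc : ContinuousOn u U) (D : ℝ) (x : Pt) {τ d : Pt} (h : wedge τ d ≠ 0) :
    ∫⁻ r in Ioo (0 : ℝ) 1, ∫⁻ s in Ioo (0 : ℝ) 1,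
        U.indicator (h1Density D u) (x + r • τ + s • d) ≤
      ENNReal.ofReal |wedge τ d|⁻¹ * ∫⁻ y in U, h1Density D u y := by
  rw [← lintegral_indicator hU.measurableSet, ← lintegral_lintegral_add_smul_add_smul h x
    (measurable_indicator_h1Density hU hc D)]
  exact (setLIntegral_le_lintegral _ _).trans
    (lintegral_mono fun r => setLIntegral_le_lintegral _ _)

theorem ofReal_sq_le_lintegral_line {E : Type*} [NormedAddCommGroup E] [NormedSpace ℝ E]
    {U : Set E} {u : E → ℝ} {y d : E} {D : ℝ} (hd : d ≠ 0) (hD : ‖d‖ ≤ D) (ho : IsOpen U)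
    (hconv : Convex ℝ U) (hb : Bornology.IsBounded U) (hc : ContinuousOn u (closure U))
    (hdiff : DifferentiableOn ℝ u U) (hy : y ∉ U) (hin : ∀ s ∈ Ioo (0 : ℝ) 1, y + s • d ∈ U) :
    ENNReal.ofReal (u y ^ 2) ≤
      ∫⁻ s in Ioo (0 : ℝ) 1, U.indicator (h1Density D u) (y + s • d) := by
  have hline := sum_ofReal_sq_le_lintegral_line (S := {()}) (U := fun _ => U) (u := fun _ => u)
    (j := 0) hd hD (fun _ _ => ho) (fun _ _ => hconv) (fun _ _ => hb)
    (by simp) (fun _ _ => hc) (fun _ _ => hdiff) (fun _ _ => hy)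
    (fun _ _ b hb hfr _ => absurd (hin b hb) (by rw [ho.frontier_eq] at hfr; exact hfr.2))
  have hstart : ∀ᶠ s in 𝓝[>] (0 : ℝ), y + s • d ∈ U :=
    eventually_of_mem (Ioo_mem_nhdsGT one_pos) hin
  simpa [Finset.filter_true_of_mem, hstart] using hline

namespace Tri

theorem norm_halfEdge (t : Tri) (σ : Equiv.Perm (Fin 3)) :
    ‖t.halfEdge σ‖ = t.edgeLength (σ 2) / 2 := by
  have hσ : (σ 2 + 1 = σ 0 ∧ σ 2 + 2 = σ 1) ∨ (σ 2 + 1 = σ 1 ∧ σ 2 + 2 = σ 0) := by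
    revert σ; decide
  rw [halfEdge, norm_smul, edgeLength, edge, Real.norm_of_nonneg (by norm_num), one_div_mul_eq_div]
  rcases hσ with ⟨h₁, h₂⟩ | ⟨h₁, h₂⟩ <;> rw [h₁, h₂]
  rw [norm_sub_rev]

theorem norm_vertex_sub_le (t : Tri) (i j : Fin 3) :
    ‖t.vertex i - t.vertex j‖ ≤ Metric.diam t.closedHull := by
  rw [← dist_eq_norm]
  exact Metric.dist_le_diam_of_mem t.isCompact_closedHull.isBounded (t.vertex_mem_closedHull i)
    (t.vertex_mem_closedHull j)

theorem norm_inward_le (t : Tri) (σ : Equiv.Perm (Fin 3)) :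
    ‖t.inward σ‖ ≤ Metric.diam t.closedHull := by
  have h := t.norm_vertex_sub_le (σ 2) (σ 0)
  rw [inward, norm_smul, Real.norm_of_nonneg (by norm_num)]
  linarith [norm_nonneg (t.vertex (σ 2) - t.vertex (σ 0))]

namespace Nondeg

variable {t : Tri}

theorem setLIntegral_halfSegment (h : t.Nondeg) (σ : Equiv.Perm (Fin 3)) (f : Pt → ℝ≥0∞) :
    ∫⁻ z in t.halfSegment σ, f z ∂μH[1] = ENNReal.ofReal ‖t.halfEdge σ‖ *
      ∫⁻ r in Ioo (0 : ℝ) 1, f (t.vertex (σ 0) + r • t.halfEdge σ) := by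
  rw [halfSegment, setLIntegral_openSegment (by simpa using (h.halfEdge_ne_zero σ))]
  simp only [add_sub_cancel_left]

theorem inward_ne_zero (h : t.Nondeg) (σ : Equiv.Perm (Fin 3)) : t.inward σ ≠ 0 := fun h₀ =>
  h.wedge_halfEdge_inward_ne_zero σ (by simp [h₀, wedge])

theorem add_halfEdge_notMem_openHull (h : t.Nondeg) (σ : Equiv.Perm (Fin 3)) {r : ℝ}
    (hr : r ∈ Ioo (0 : ℝ) 1) : t.vertex (σ 0) + r • t.halfEdge σ ∉ t.openHull := by
  rw [← h.interior_convexHull_range_basis, h.basis.interior_convexHull]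
  exact fun hpos => (hpos (σ 2)).ne' (h.add_halfEdge_mem_openFacet σ hr).1

theorem lintegral_halfSegment_sq_le (h : t.Nondeg) {u : Pt → ℝ} (hc : ContinuousOn u t.closedHull)
    (hdiff : DifferentiableOn ℝ u t.openHull) {D : ℝ} (hD : Metric.diam t.closedHull ≤ D)
    (σ : Equiv.Perm (Fin 3)) :
    ∫⁻ z in t.halfSegment σ, ENNReal.ofReal (u z ^ 2) ∂μH[1] ≤
      ENNReal.ofReal (2 * t.edgeLength (σ 2) / |t.cross|) *
        ∫⁻ y in t.openHull, h1Density D u y := by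
  have hline (r : ℝ) (hr : r ∈ Ioo (0 : ℝ) 1) :
      ENNReal.ofReal (u (t.vertex (σ 0) + r • t.halfEdge σ) ^ 2) ≤ ∫⁻ s in Ioo (0 : ℝ) 1,
        t.openHull.indicator (h1Density D u)
          (t.vertex (σ 0) + r • t.halfEdge σ + s • t.inward σ) :=
    ofReal_sq_le_lintegral_line (h.inward_ne_zero σ) ((t.norm_inward_le σ).trans hD)
      t.isOpen_openHull (convex_convexHull ℝ _).interior
      (t.isCompact_closedHull.isBounded.subset interior_subset) (by rwa [h.closure_openHull])
      hdiff (h.add_halfEdge_notMem_openHull σ hr)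
      fun s hs => h.add_halfEdge_add_inward_mem_openHull σ hr hs
  calc ∫⁻ z in t.halfSegment σ, ENNReal.ofReal (u z ^ 2) ∂μH[1]
      ≤ ENNReal.ofReal ‖t.halfEdge σ‖ * (ENNReal.ofReal |wedge (t.halfEdge σ) (t.inward σ)|⁻¹ *
          ∫⁻ y in t.openHull, h1Density D u y) := by
        rw [h.setLIntegral_halfSegment]
        gcongr
        exact (setLIntegral_mono' measurableSet_Ioo hline).trans
          (setLIntegral_parallelogram_h1Density_le t.isOpen_openHull (hc.mono interior_subset) D _
            (h.wedge_halfEdge_inward_ne_zero σ))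
    _ = _ := by
        rw [← mul_assoc, ← ENNReal.ofReal_mul (norm_nonneg _), t.abs_wedge_halfEdge_inward,
          t.norm_halfEdge]
        congr 2
        field_simp
        norm_num

theorem lintegral_edge_sq_le (h : t.Nondeg) {u : Pt → ℝ} (hc : ContinuousOn u t.closedHull)
    (hdiff : DifferentiableOn ℝ u t.openHull) {D : ℝ} (hD : Metric.diam t.closedHull ≤ D)
    (i : Fin 3) :
    ∫⁻ z in t.openEdge i, ENNReal.ofReal (u z ^ 2) ∂μH[1] ≤
      ENNReal.ofReal (4 * t.edgeLength i / |t.cross|) *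
        ∫⁻ y in t.openHull, h1Density D u y := by
  obtain ⟨σ, σ', rfl, hσ', hsub⟩ := t.exists_openEdge_subset_halfSegment_union i
  have hnull : μH[1] ({midpoint ℝ (t.edge (σ 2)).1 (t.edge (σ 2)).2} : Set Pt) = 0 := by
    have := Measure.nullSingletonClass_hausdorff Pt one_pos
    exact measure_singleton _
  have hhalf := h.lintegral_halfSegment_sq_le hc hdiff hD σ
  have hhalf' := h.lintegral_halfSegment_sq_le hc hdiff hD σ'
  rw [hσ'] at hhalf'
  set ℓ := t.edgeLength (σ 2)
  calc _ ≤ (∫⁻ z in {midpoint ℝ (t.edge (σ 2)).1 (t.edge (σ 2)).2},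
          ENNReal.ofReal (u z ^ 2) ∂μH[1]) + ((∫⁻ z in t.halfSegment σ, ENNReal.ofReal (u z ^ 2)
          ∂μH[1]) + ∫⁻ z in t.halfSegment σ', ENNReal.ofReal (u z ^ 2) ∂μH[1]) := by
        rw [insert_eq] at hsub
        exact (lintegral_mono_set hsub).trans ((lintegral_union_le _ _ _).trans
          (add_le_add_right (lintegral_union_le _ _ _) _))
    _ ≤ ENNReal.ofReal (2 * ℓ / |t.cross|) * (∫⁻ y in t.openHull, h1Density D u y) +
          ENNReal.ofReal (2 * ℓ / |t.cross|) * ∫⁻ y in t.openHull, h1Density D u y := by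
        rw [setLIntegral_measure_zero _ _ hnull, zero_add]
        exact add_le_add hhalf hhalf'
    _ = _ := by
        rw [← add_mul, ← ENNReal.ofReal_add (by positivity) (by positivity)]
        congr 2
        ring

theorem lintegral_edge_norm_mul_sq_le (h : t.Nondeg) {u : Pt → ℝ}
    (hc : ContinuousOn u t.closedHull) (hdiff : DifferentiableOn ℝ u t.openHull) {D K : ℝ}
    (hD : Metric.diam t.closedHull ≤ D) (hK : t.shapeReg ≤ K) (i : Fin 3) :
    ∫⁻ z in t.openEdge i, ENNReal.ofReal (t.edgeLength i * u z ^ 2) ∂μH[1] ≤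
      ENNReal.ofReal (8 * K) * ∫⁻ y in t.openHull, h1Density D u y := by
  have hcross : 0 < |t.cross| := abs_pos.2 h
  have hshape := h.sq_norm_edge_le hK i
  simp only [ENNReal.ofReal_mul (norm_nonneg ((t.edge i).2 - (t.edge i).1))]
  rw [lintegral_const_mul' _ _ ENNReal.ofReal_ne_top]
  grw [h.lintegral_edge_sq_le hc hdiff hD i]
  rw [← mul_assoc, ← ENNReal.ofReal_mul (norm_nonneg _)]
  refine mul_le_mul_left (ENNReal.ofReal_le_ofReal ?_) _
  rw [mul_div_assoc', div_le_iff₀ hcross]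
  linarith

end Nondeg

end Tri

end LocalTrace

theorem abs_sq_sub_sq_le {ℓ : ℝ} (hℓ : 0 < ℓ) (a b : ℝ) :
    |a ^ 2 - b ^ 2| ≤ (1 + ℓ) * (ℓ⁻¹ * (a - b) ^ 2) + ℓ * a ^ 2 := by
  have hfactor : a ^ 2 - b ^ 2 = 2 * (a * (a - b)) - (a - b) ^ 2 := by ring
  have hsq : ℓ⁻¹ * (a - b) ^ 2 + ℓ * a ^ 2 - 2 * (a * (a - b)) = ℓ⁻¹ * (a - b - ℓ * a) ^ 2 := by
    field_simp; ring
  have hsq' : ℓ⁻¹ * (a - b) ^ 2 + ℓ * a ^ 2 + 2 * (a * (a - b)) = ℓ⁻¹ * (a - b + ℓ * a) ^ 2 := by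
    field_simp; ring
  have hexpand : (1 + ℓ) * (ℓ⁻¹ * (a - b) ^ 2) = ℓ⁻¹ * (a - b) ^ 2 + (a - b) ^ 2 := by
    field_simp
  have h₁ : 0 ≤ ℓ⁻¹ * (a - b - ℓ * a) ^ 2 := by positivity
  have h₂ : 0 ≤ ℓ⁻¹ * (a - b + ℓ * a) ^ 2 := by positivity
  rw [hfactor, hexpand, abs_le]
  constructor <;> nlinarith [sq_nonneg (a - b)]

namespace Tri

/-- The density `|e|⁻¹ [u]²` on the `i`-th edge `e` of `t`, if it is shared with `t'`. -/
def jumpDensity (u : Tri → Pt → ℝ) (t t' : Tri) (i : Fin 3) (z : Pt) : ℝ≥0∞ :=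
  if t.SharesEdge t' i then ENNReal.ofReal ((t.edgeLength i)⁻¹ * (u t z - u t' z) ^ 2) else 0

theorem segment_edge_subset_closedHull (t : Tri) (i : Fin 3) :
    segment ℝ (t.edge i).1 (t.edge i).2 ⊆ t.closedHull :=
  (convex_convexHull ℝ _).segment_subset (t.vertex_mem_closedHull (i + 1))
    (t.vertex_mem_closedHull (i + 2))

theorem SharesEdge.segment_subset_closedHull {t t' : Tri} {i : Fin 3} (h : t.SharesEdge t' i) :
    segment ℝ (t.edge i).1 (t.edge i).2 ⊆ t'.closedHull := by
  obtain ⟨e', he', hsame⟩ := h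
  obtain ⟨i', rfl⟩ := t'.mem_edgeList_iff.1 he'
  rcases hsame with h | h
  · exact h ▸ t'.segment_edge_subset_closedHull i'
  · have hsub := t'.segment_edge_subset_closedHull i'
    rwa [h, segment_symm] at hsub

theorem SharesEdge.continuousOn_sub {t t' : Tri} {i : Fin 3} (h : t.SharesEdge t' i)
    {f g : Pt → ℝ} (hf : ContinuousOn f t.closedHull) (hg : ContinuousOn g t'.closedHull) :
    ContinuousOn (fun z => f z - g z) (segment ℝ (t.edge i).1 (t.edge i).2) :=
  (hf.mono (t.segment_edge_subset_closedHull i)).sub (hg.mono h.segment_subset_closedHull)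

theorem edgeLength_le (t : Tri) (i : Fin 3) : t.edgeLength i ≤ Metric.diam t.closedHull :=
  t.norm_vertex_sub_le _ _

theorem Nondeg.edgeLength_pos {t : Tri} (h : t.Nondeg) (i : Fin 3) : 0 < t.edgeLength i :=
  norm_pos_iff.2 (sub_ne_zero.2 (h.edge_fst_ne_snd i).symm)

end Tri

namespace Triangulation

variable {Ω : Set Pt} {T : Triangulation Ω} {t t' : Tri} {D K : ℝ} {u : Tri → Pt → ℝ}

/-- A density on the `i`-th edge of `t` bounding the change of `u²` from `t` to its neighbour across
this edge; the term `|e| u²` is controlled by the trace inequality in `t`. -/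
def exitDensity (T : Triangulation Ω) (D : ℝ) (u : Tri → Pt → ℝ) (t : Tri) (i : Fin 3) (z : Pt) :
    ℝ≥0∞ :=
  ENNReal.ofReal (1 + D) * ∑ t' ∈ T.tris.erase t, Tri.jumpDensity u t t' i z +
    ENNReal.ofReal (t.edgeLength i * u t z ^ 2)

/-- The local part of the squared `H¹_h` norm, with weights `2` and `D²` on the `L²` and gradient
terms: the contribution of the triangle `t` and the jumps across its edges. -/
def localEnergy (T : Triangulation Ω) (D : ℝ) (u : Tri → Pt → ℝ) (t : Tri) : ℝ≥0∞ :=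
  (∫⁻ y in t.openHull, h1Density D (u t) y) + ∑ i, ∑ t' ∈ T.tris.erase t,
    ∫⁻ z in t.openEdge i, Tri.jumpDensity u t t' i z ∂μH[1]

/-- The square of the trace of `u` on the boundary edges, as a density. -/
def traceDensity (T : Triangulation Ω) (u : Tri → Pt → ℝ) (y : Pt) : ℝ≥0∞ :=
  ∑ t ∈ T.tris, ∑ i, if t.HasBoundaryEdge Ω i then
    (t.openEdge i).indicator (fun z => ENNReal.ofReal (u t z ^ 2)) y
  else 0

theorem PwH1.continuousOn_jumpDensity (hu : T.PwH1 u) (ht : t ∈ T.tris) (ht' : t' ∈ T.tris)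
    (i : Fin 3) : ContinuousOn (Tri.jumpDensity u t t' i) (t.openEdge i) := by
  unfold Tri.jumpDensity
  split_ifs with hshare
  · have hjump := (hshare.continuousOn_sub (hu t ht).1 (hu t' ht').1).mono
      (openSegment_subset_segment ℝ _ _)
    exact ENNReal.continuous_ofReal.comp_continuousOn (continuousOn_const.mul (hjump.pow 2))
  · exact continuousOn_const

theorem PwH1.continuousOn_sum_jumpDensity (hu : T.PwH1 u) (ht : t ∈ T.tris) (i : Fin 3) :
    ContinuousOn (fun z => ENNReal.ofReal (1 + D) *
      ∑ t' ∈ T.tris.erase t, Tri.jumpDensity u t t' i z) (t.openEdge i) :=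
  (ENNReal.continuous_const_mul ENNReal.ofReal_ne_top).comp_continuousOn
    (continuousOn_finsetSum _ fun _ ht' =>
      hu.continuousOn_jumpDensity ht (Finset.mem_of_mem_erase ht') i)

theorem PwH1.continuousOn_exitDensity (hu : T.PwH1 u) (ht : t ∈ T.tris) (i : Fin 3) :
    ContinuousOn (exitDensity T D u t i) (t.openEdge i) := by
  have hcont : ContinuousOn (u t) (t.openEdge i) := (hu t ht).1.mono
    ((openSegment_subset_segment ℝ _ _).trans (t.segment_edge_subset_closedHull i))
  exact (hu.continuousOn_sum_jumpDensity ht i).add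
    (ENNReal.continuous_ofReal.comp_continuousOn (continuousOn_const.mul (hcont.pow 2)))

theorem ofReal_abs_sq_sub_sq_le_exitDensity (ht : t.Nondeg) (ht' : t' ∈ T.tris) (hne : t ≠ t')
    {i : Fin 3} (hshare : t.SharesEdge t' i) (hD : Metric.diam t.closedHull ≤ D) (z : Pt) :
    ENNReal.ofReal |u t z ^ 2 - u t' z ^ 2| ≤ exitDensity T D u t i z := by
  have hpos := ht.edgeLength_pos i
  have hlen : t.edgeLength i ≤ D := (t.edgeLength_le i).trans hD
  have hjump : ENNReal.ofReal ((t.edgeLength i)⁻¹ * (u t z - u t' z) ^ 2) ≤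
      ∑ t' ∈ T.tris.erase t, Tri.jumpDensity u t t' i z := by
    refine le_trans (le_of_eq ?_) (Finset.single_le_sum_of_canonicallyOrdered
      (Finset.mem_erase.2 ⟨hne.symm, ht'⟩))
    rw [Tri.jumpDensity, if_pos hshare]
  calc _ ≤ ENNReal.ofReal ((1 + D) * ((t.edgeLength i)⁻¹ * (u t z - u t' z) ^ 2) +
          t.edgeLength i * u t z ^ 2) := by
        refine ENNReal.ofReal_le_ofReal ((abs_sq_sub_sq_le hpos _ _).trans ?_)
        gcongr
    _ ≤ _ := by
        rw [ENNReal.ofReal_add (mul_nonneg (by linarith) (by positivity)) (by positivity),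
          ENNReal.ofReal_mul (by linarith)]
        exact add_le_add_left (mul_le_mul_right hjump _) _

theorem PwH1.lintegral_exitDensity_le (hu : T.PwH1 u) (hK : T.ShapeRegular K) (ht : t ∈ T.tris)
    (hD : Metric.diam t.closedHull ≤ D) (i : Fin 3) :
    ∫⁻ z in t.openEdge i, exitDensity T D u t i z ∂μH[1] ≤
      ENNReal.ofReal (1 + D) * (∑ t' ∈ T.tris.erase t,
        ∫⁻ z in t.openEdge i, Tri.jumpDensity u t t' i z ∂μH[1]) +
      ENNReal.ofReal (8 * K) * ∫⁻ y in t.openHull, h1Density D (u t) y := by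
  have h := T.nondeg t ht
  have hmeas := measurableSet_openSegment (h.edge_fst_ne_snd i)
  unfold exitDensity
  rw [lintegral_add_left' ((hu.continuousOn_sum_jumpDensity ht i).aemeasurable hmeas),
    lintegral_const_mul' _ _ ENNReal.ofReal_ne_top, lintegral_finsetSum' _ fun t' ht' =>
      (hu.continuousOn_jumpDensity ht (Finset.mem_of_mem_erase ht') i).aemeasurable hmeas]
  gcongr
  exact h.lintegral_edge_norm_mul_sq_le (hu t ht).1 (hu t ht).2.1 hD (hK t ht) i

theorem PwH1.sum_lintegral_exitDensity_le (hu : T.PwH1 u) (hK : T.ShapeRegular K)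
    (ht : t ∈ T.tris) (hD : Metric.diam t.closedHull ≤ D) :
    ∑ i, ∫⁻ z in t.openEdge i, exitDensity T D u t i z ∂μH[1] ≤
      (ENNReal.ofReal (1 + D) + 3 * ENNReal.ofReal (8 * K)) * localEnergy T D u t :=
  calc _ ≤ ENNReal.ofReal (1 + D) * (∑ i, ∑ t' ∈ T.tris.erase t,
          ∫⁻ z in t.openEdge i, Tri.jumpDensity u t t' i z ∂μH[1]) +
        3 * ENNReal.ofReal (8 * K) * ∫⁻ y in t.openHull, h1Density D (u t) y := by
        refine (Finset.sum_le_sum fun i _ => hu.lintegral_exitDensity_le hK ht hD i).trans_eq ?_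
        simp [Finset.sum_add_distrib, Finset.mul_sum, mul_assoc]
    _ ≤ _ := by
        rw [add_mul]
        gcongr
        exacts [le_add_self, le_self_add]

theorem PwH1.sum_ofReal_sq_le_line (hu : T.PwH1 u) (hD : ∀ t ∈ T.tris, Metric.diam t.closedHull ≤ D)
    {y d : Pt} (hd₀ : d ≠ 0) (hd : ‖d‖ ≤ D) (hy : y ∉ Ω) (hin : ∀ s ∈ Ioo (0 : ℝ) 1, y + s • d ∈ Ω)
    (hv : ∀ t ∈ T.tris, ∀ i, ∀ s : ℝ, y + s • d ≠ t.vertex i) :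
    ∑ t ∈ T.tris with ∀ᶠ s in 𝓝[>] (0 : ℝ), y + s • d ∈ t.openHull, ENNReal.ofReal (u t y ^ 2) ≤
      (∑ t ∈ T.tris, ∫⁻ s in Ioo (0 : ℝ) 1, t.openHull.indicator (h1Density D (u t)) (y + s • d)) +
        ∑ t ∈ T.tris, ∑ i, crossing (t.edge i).1 (t.edge i).2 d (exitDensity T D u t i) y := by
  refine sum_ofReal_sq_le_lintegral_line hd₀ hd (fun t _ => t.isOpen_openHull)
    (fun t _ => (convex_convexHull ℝ _).interior)
    (fun t _ => t.isCompact_closedHull.isBounded.subset interior_subset)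
    (fun t ht t' ht' hne => disjoint_iff_inter_eq_empty.2 (T.disj t ht t' ht' hne))
    (fun t ht => by rw [(T.nondeg t ht).closure_openHull]; exact (hu t ht).1)
    (fun t ht => (hu t ht).2.1) (fun t ht hyt => hy (T.openHull_subset ht hyt)) ?_
  intro t ht b hb hfr hleft
  obtain ⟨i, hw, hi, t', ht', hne, hshare, hnot, hright⟩ :=
    T.exists_next_of_eventually_mem ht (hin b hb) hfr (fun i => hv t ht i b) hleft
  refine ⟨t', ht', hnot, hright, (ofReal_abs_sq_sub_sq_le_exitDensity (T.nondeg t ht) ht' hne hshare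
    (hD t ht) _).trans ?_⟩
  rw [← crossing_eq (exitDensity T D u t i) hw hi]
  exact Finset.single_le_sum_of_canonicallyOrdered
    (f := fun i => crossing (t.edge i).1 (t.edge i).2 d (exitDensity T D u t i) y)
    (Finset.mem_univ i)

end Triangulation

namespace Triangulation

variable {Ω : Set Pt} {T T₀ : Triangulation Ω} {t t₀ : Tri} {D K : ℝ} {u : Tri → Pt → ℝ}

theorem diam_closedHull_le (T : Triangulation Ω) (hΩ : Bornology.IsBounded Ω) (ht : t ∈ T.tris) :
    Metric.diam t.closedHull ≤ Metric.diam Ω := by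
  rw [← Metric.diam_closure Ω]
  exact Metric.diam_mono (T.closedHull_subset_closure ht) hΩ.closure

theorem traceDensity_le_sum_filter (T : Triangulation Ω) (u : Tri → Pt → ℝ) (ht₀ : t₀ ∈ T₀.tris)
    (σ : Equiv.Perm (Fin 3)) {y : Pt} (hy : y ∈ openFacet (T₀.nondeg t₀ ht₀).basis (σ 2)) :
    traceDensity T u y ≤ 3 * ∑ t ∈ T.tris with ∀ᶠ s in 𝓝[>] (0 : ℝ),
      y + s • t₀.inward σ ∈ t.openHull, ENNReal.ofReal (u t y ^ 2) := by
  have hinward {t : Tri} (ht : t ∈ T.tris) {i : Fin 3} (hb : t.HasBoundaryEdge Ω i)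
      (hi : y ∈ t.openEdge i) : ∀ᶠ s in 𝓝[>] (0 : ℝ), y + s • t₀.inward σ ∈ t.openHull := by
    have h := T.nondeg t ht
    rw [← h.openFacet_basis] at hi
    rw [← h.interior_convexHull_range_basis]
    exact eventually_mem_interior_convexHull (a := 0) (by simpa using hi)
      (coord_linear_pos_of_hasBoundaryEdge ht ht₀ hb hi hy
        ((T₀.nondeg t₀ ht₀).coord_linear_inward_pos σ))
  rw [Finset.sum_filter, Finset.mul_sum, traceDensity]
  refine Finset.sum_le_sum fun t ht => ?_
  calc _ ≤ ∑ _i : Fin 3, if ∀ᶠ s in 𝓝[>] (0 : ℝ), y + s • t₀.inward σ ∈ t.openHull then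
          ENNReal.ofReal (u t y ^ 2) else 0 := by
        refine Finset.sum_le_sum fun i _ => ?_
        split_ifs with hb hev
        · exact indicator_le_self _ _ _
        · rw [indicator_of_notMem fun hi => hev (hinward ht hb hi)]
        · exact zero_le
        · exact le_rfl
    _ = _ := by simp

theorem PwH1.lintegral_line_le (hu : T.PwH1 u) (hK : T.ShapeRegular K)
    (hD : ∀ t ∈ T.tris, Metric.diam t.closedHull ≤ D) (x : Pt) {τ d : Pt} (h : wedge τ d ≠ 0)
    (hd : ‖d‖ ≤ D) :
    ∫⁻ r in Ioo (0 : ℝ) 1, ((∑ t ∈ T.tris, ∫⁻ s in Ioo (0 : ℝ) 1,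
        t.openHull.indicator (h1Density D (u t)) (x + r • τ + s • d)) +
      ∑ t ∈ T.tris, ∑ i, crossing (t.edge i).1 (t.edge i).2 d (exitDensity T D u t i)
        (x + r • τ)) ≤
      (ENNReal.ofReal |wedge τ d|⁻¹ + ENNReal.ofReal (D / |wedge τ d|) *
        (ENNReal.ofReal (1 + D) + 3 * ENNReal.ofReal (8 * K))) *
          ∑ t ∈ T.tris, localEnergy T D u t := by
  have hbulk (t : Tri) (ht : t ∈ T.tris) : Measurable fun r : ℝ => ∫⁻ s in Ioo (0 : ℝ) 1,
      t.openHull.indicator (h1Density D (u t)) (x + r • τ + s • d) :=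
    Measurable.lintegral_prod_right' (f := fun p : ℝ × ℝ =>
      t.openHull.indicator (h1Density D (u t)) (x + p.1 • τ + p.2 • d))
      ((measurable_indicator_h1Density t.isOpen_openHull ((hu t ht).1.mono interior_subset) D).comp
        (by fun_prop))
  have hcross (t : Tri) (ht : t ∈ T.tris) (i : Fin 3) : Measurable fun r : ℝ =>
      crossing (t.edge i).1 (t.edge i).2 d (exitDensity T D u t i) (x + r • τ) :=
    (measurable_crossing d (hu.continuousOn_exitDensity ht i)).comp (by fun_prop)
  rw [lintegral_add_left (Finset.measurable_sum _ hbulk), lintegral_finsetSum _ hbulk,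
    lintegral_finsetSum _ fun t ht => Finset.measurable_sum _ fun i _ => hcross t ht i,
    ← Finset.sum_add_distrib, Finset.mul_sum]
  refine Finset.sum_le_sum fun t ht => ?_
  rw [lintegral_finsetSum _ fun i _ => hcross t ht i, add_mul, mul_assoc]
  refine add_le_add ?_ ?_
  · exact (setLIntegral_parallelogram_h1Density_le t.isOpen_openHull
      ((hu t ht).1.mono interior_subset) D x h).trans (mul_le_mul_right le_self_add _)
  · calc _ ≤ ∑ i, ENNReal.ofReal (D / |wedge τ d|) *
            ∫⁻ z in t.openEdge i, exitDensity T D u t i z ∂μH[1] := by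
          refine Finset.sum_le_sum fun i _ => (setLIntegral_le_lintegral _ _).trans
            ((lintegral_crossing_le h ((T.nondeg t ht).edge_fst_ne_snd i) x _).trans ?_)
          gcongr
      _ ≤ _ := by
          rw [← Finset.mul_sum]
          exact mul_le_mul_right (hu.sum_lintegral_exitDensity_le hK ht (hD t ht)) _

theorem PwH1.lintegral_chart_traceDensity_le (hu : T.PwH1 u) (hK : T.ShapeRegular K)
    (hΩ : Bornology.IsBounded Ω) (ht₀ : t₀ ∈ T₀.tris) {σ : Equiv.Perm (Fin 3)}
    (hb : t₀.HasBoundaryEdge Ω (σ 2)) :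
    ∫⁻ r in Ioo (0 : ℝ) 1, traceDensity T u (t₀.vertex (σ 0) + r • t₀.halfEdge σ) ≤
      3 * ((ENNReal.ofReal |wedge (t₀.halfEdge σ) (t₀.inward σ)|⁻¹ +
        ENNReal.ofReal (Metric.diam Ω / |wedge (t₀.halfEdge σ) (t₀.inward σ)|) *
          (ENNReal.ofReal (1 + Metric.diam Ω) + 3 * ENNReal.ofReal (8 * K))) *
        ∑ t ∈ T.tris, localEnergy T (Metric.diam Ω) u t) := by
  have h₀ := T₀.nondeg t₀ ht₀
  have hw := h₀.wedge_halfEdge_inward_ne_zero σ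
  have hd : ‖t₀.inward σ‖ ≤ Metric.diam Ω :=
    (t₀.norm_inward_le σ).trans (T₀.diam_closedHull_le hΩ ht₀)
  have hvertices : (⋃ t ∈ T.tris, range t.vertex).Countable :=
    T.tris.countable_toSet.biUnion fun t _ => countable_range _
  grw [← hu.lintegral_line_le hK (fun t ht => T.diam_closedHull_le hΩ ht) (t₀.vertex (σ 0)) hw hd,
    ← lintegral_const_mul' _ _ (by simp)]
  refine lintegral_mono_ae ?_
  filter_upwards [ae_restrict_of_ae (ae_forall_add_smul_add_smul_notMem hw _ hvertices),
    ae_restrict_mem measurableSet_Ioo] with r hgeneric hr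
  have hfacet := h₀.add_halfEdge_mem_openFacet σ hr
  grw [traceDensity_le_sum_filter T u ht₀ σ hfacet]
  refine mul_le_mul_right (hu.sum_ofReal_sq_le_line (fun t ht => T.diam_closedHull_le hΩ ht)
    (h₀.inward_ne_zero σ) hd ?_ ?_ ?_) _
  · rw [h₀.openFacet_basis] at hfacet
    exact T.notMem_of_mem_frontier (hb.openEdge_subset hfacet)
  · exact fun s hs => T₀.openHull_subset ht₀ (h₀.add_halfEdge_add_inward_mem_openHull σ hr hs)
  · exact fun t ht i s heq => hgeneric s (mem_biUnion (x := t) ht ⟨i, heq.symm⟩)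

theorem exists_setLIntegral_halfSegment_traceDensity_le (hΩ : Bornology.IsBounded Ω)
    (ht₀ : t₀ ∈ T₀.tris) {σ : Equiv.Perm (Fin 3)} (hb : t₀.HasBoundaryEdge Ω (σ 2)) (K : ℝ) :
    ∃ M : ℝ≥0∞, M ≠ ⊤ ∧ ∀ T : Triangulation Ω, T.ShapeRegular K → ∀ u, T.PwH1 u →
      ∫⁻ z in t₀.halfSegment σ, traceDensity T u z ∂μH[1] ≤
        M * ∑ t ∈ T.tris, localEnergy T (Metric.diam Ω) u t := by
  refine ⟨ENNReal.ofReal ‖t₀.halfEdge σ‖ * (3 *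
    (ENNReal.ofReal |wedge (t₀.halfEdge σ) (t₀.inward σ)|⁻¹ +
      ENNReal.ofReal (Metric.diam Ω / |wedge (t₀.halfEdge σ) (t₀.inward σ)|) *
        (ENNReal.ofReal (1 + Metric.diam Ω) + 3 * ENNReal.ofReal (8 * K)))), by finiteness,
    fun T hK u hu => ?_⟩
  rw [(T₀.nondeg t₀ ht₀).setLIntegral_halfSegment, mul_assoc, mul_assoc]
  exact mul_le_mul_right (hu.lintegral_chart_traceDensity_le hK hΩ ht₀ hb) _

theorem exists_setLIntegral_frontier_traceDensity_le (T₀ : Triangulation Ω)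
    (hΩ : Bornology.IsBounded Ω) (K : ℝ) :
    ∃ M : ℝ≥0∞, M ≠ ⊤ ∧ ∀ T : Triangulation Ω, T.ShapeRegular K → ∀ u, T.PwH1 u →
      ∫⁻ z in frontier Ω, traceDensity T u z ∂μH[1] ≤
        M * ∑ t ∈ T.tris, localEnergy T (Metric.diam Ω) u t := by
  obtain ⟨s, hs, hcover⟩ := T₀.exists_finite_frontier_subset
  have hnull : μH[1] s = 0 := by
    have := Measure.nullSingletonClass_hausdorff Pt one_pos
    exact hs.measure_zero _
  set S := {c ∈ T₀.tris ×ˢ (Finset.univ : Finset (Equiv.Perm (Fin 3))) |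
    c.1.HasBoundaryEdge Ω (c.2 2)} with hS
  have hmemS {c} : c ∈ S ↔ c.1 ∈ T₀.tris ∧ c.1.HasBoundaryEdge Ω (c.2 2) := by simp [hS]
  choose M hM hbound using fun c : S => exists_setLIntegral_halfSegment_traceDensity_le hΩ
    (hmemS.1 c.2).1 (hmemS.1 c.2).2 K
  have hunion : frontier Ω ⊆ s ∪ ⋃ c : S, c.1.1.halfSegment c.1.2 := by
    refine hcover.trans (union_subset_union_right _ ?_)
    exact iUnion₂_subset fun t ht => iUnion₂_subset fun σ hσ =>
      subset_iUnion_of_subset ⟨(t, σ), hmemS.2 ⟨ht, hσ⟩⟩ subset_rfl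
  refine ⟨∑ c, M c, ENNReal.sum_ne_top.2 fun c _ => hM c, fun T hK u hu => ?_⟩
  calc ∫⁻ z in frontier Ω, traceDensity T u z ∂μH[1]
      ≤ (∫⁻ z in s, traceDensity T u z ∂μH[1]) +
          ∫⁻ z in ⋃ c : S, c.1.1.halfSegment c.1.2, traceDensity T u z ∂μH[1] :=
        (lintegral_mono_set hunion).trans (lintegral_union_le _ _ _)
    _ ≤ ∑ c : S, ∫⁻ z in c.1.1.halfSegment c.1.2, traceDensity T u z ∂μH[1] := by
        rw [setLIntegral_measure_zero _ _ hnull, zero_add]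
        exact (lintegral_iUnion_le _ _).trans_eq (tsum_fintype _)
    _ ≤ _ := by
        rw [Finset.sum_mul]
        exact Finset.sum_le_sum fun c _ => hbound c T hK u hu

end Triangulation

theorem segInt_nonneg {p q : Pt} {f : Pt → ℝ} (hf : 0 ≤ f) : 0 ≤ segInt p q f :=
  mul_nonneg dist_nonneg (intervalIntegral.integral_nonneg zero_le_one fun _ _ => hf _)

theorem ofReal_segInt {p q : Pt} (hpq : p ≠ q) {f : Pt → ℝ} (hf : 0 ≤ f)
    (hc : ContinuousOn f (segment ℝ p q)) :
    ENNReal.ofReal (segInt p q f) = ∫⁻ z in openSegment ℝ p q, ENNReal.ofReal (f z) ∂μH[1] := by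
  have hline : ContinuousOn (fun s : ℝ => f (p + s • (q - p))) (Icc 0 1) :=
    hc.comp (by fun_prop) fun s hs => segment_eq_image' ℝ p q ▸ mem_image_of_mem _ hs
  have hint : IntegrableOn (fun s : ℝ => f (p + s • (q - p))) (Ioo 0 1) :=
    (hline.integrableOn_compact isCompact_Icc).mono_set Ioo_subset_Icc_self
  rw [setLIntegral_openSegment hpq, segInt, ENNReal.ofReal_mul dist_nonneg, dist_comm,
    dist_eq_norm, intervalIntegral.integral_of_le zero_le_one, integral_Ioc_eq_integral_Ioo,
    ofReal_integral_eq_lintegral_ofReal hint (ae_of_all _ fun _ => hf _)]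

namespace Triangulation

variable {Ω : Set Pt} {T : Triangulation Ω} {t t' : Tri} {D : ℝ} {u : Tri → Pt → ℝ}

theorem edgeJump_eq_sum (u : Tri → Pt → ℝ) (t t' : Tri) :
    edgeJump u t t' = ∑ i, if t.SharesEdge t' i then (t.edgeLength i)⁻¹ *
      segInt (t.edge i).1 (t.edge i).2 (fun x => (u t x - u t' x) ^ 2) else 0 := by
  simp only [edgeJump, t.sum_map_edgeList, Tri.SharesEdge, Tri.edgeLength, ← dist_eq_norm,
    dist_comm]

theorem edgeJump_nonneg (u : Tri → Pt → ℝ) (t t' : Tri) : 0 ≤ edgeJump u t t' := by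
  rw [edgeJump_eq_sum]
  refine Finset.sum_nonneg fun i _ => ?_
  split_ifs
  exacts [mul_nonneg (by positivity) (segInt_nonneg fun _ => sq_nonneg _), le_rfl]

theorem PwH1.ofReal_edgeJump (hu : T.PwH1 u) (ht : t ∈ T.tris) (ht' : t' ∈ T.tris) :
    ENNReal.ofReal (edgeJump u t t') =
      ∑ i, ∫⁻ z in t.openEdge i, Tri.jumpDensity u t t' i z ∂μH[1] := by
  rw [edgeJump_eq_sum, ENNReal.ofReal_sum_of_nonneg]
  · refine Finset.sum_congr rfl fun i _ => ?_
    simp only [Tri.jumpDensity]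
    split_ifs with hshare
    · simp only [ENNReal.ofReal_mul (inv_nonneg.2 (norm_nonneg _))]
      rw [lintegral_const_mul' _ _ ENNReal.ofReal_ne_top,
        ofReal_segInt ((T.nondeg t ht).edge_fst_ne_snd i) (fun _ => sq_nonneg _)
          ((hshare.continuousOn_sub (hu t ht).1 (hu t' ht').1).pow 2)]
    · simp
  · intro i _
    split_ifs
    exacts [mul_nonneg (by positivity) (segInt_nonneg fun _ => sq_nonneg _), le_rfl]

theorem PwH1.lintegral_h1Density (hu : T.PwH1 u) (ht : t ∈ T.tris) :
    ∫⁻ y in t.openHull, h1Density D (u t) y = ENNReal.ofReal (2 * (∫ x in t.openHull, u t x ^ 2) +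
      D ^ 2 * ∫ x in t.openHull, ‖fderiv ℝ (u t) x‖ ^ 2) := by
  obtain ⟨-, -, hsq, hgrad⟩ := hu t ht
  have hint : IntegrableOn (fun x => 2 * u t x ^ 2 + D ^ 2 * ‖fderiv ℝ (u t) x‖ ^ 2) t.openHull :=
    (hsq.const_mul _).add (hgrad.const_mul _)
  rw [← integral_const_mul, ← integral_const_mul,
    ← integral_add (hsq.const_mul _) (hgrad.const_mul _)]
  exact (ofReal_integral_eq_lintegral_ofReal hint (ae_of_all _ fun _ => by positivity)).symm

theorem sqL2_nonneg (T : Triangulation Ω) (u : Tri → Pt → ℝ) : 0 ≤ T.sqL2 u :=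
  Finset.sum_nonneg fun _ _ => integral_nonneg fun _ => sq_nonneg _

theorem gradSq_nonneg (T : Triangulation Ω) (u : Tri → Pt → ℝ) : 0 ≤ T.gradSq u :=
  Finset.sum_nonneg fun _ _ => integral_nonneg fun _ => sq_nonneg _

theorem two_mul_jumpSq (T : Triangulation Ω) (u : Tri → Pt → ℝ) :
    2 * T.jumpSq u = ∑ t ∈ T.tris, ∑ t' ∈ T.tris.erase t, edgeJump u t t' := by
  rw [jumpSq, ← mul_assoc, mul_one_div_cancel two_ne_zero, one_mul]
  simp only [← Finset.sum_filter, Finset.filter_ne]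

theorem jumpSq_nonneg (T : Triangulation Ω) (u : Tri → Pt → ℝ) : 0 ≤ T.jumpSq u := by
  have h : 0 ≤ 2 * T.jumpSq u := T.two_mul_jumpSq u ▸
    Finset.sum_nonneg fun _ _ => Finset.sum_nonneg fun _ _ => edgeJump_nonneg _ _ _
  linarith

theorem normSq_nonneg (T : Triangulation Ω) (u : Tri → Pt → ℝ) : 0 ≤ T.normSq u :=
  add_nonneg (add_nonneg (T.sqL2_nonneg u) (T.gradSq_nonneg u)) (T.jumpSq_nonneg u)

theorem PwH1.localEnergy_eq (hu : T.PwH1 u) (ht : t ∈ T.tris) :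
    localEnergy T D u t = ENNReal.ofReal (2 * (∫ x in t.openHull, u t x ^ 2) +
      D ^ 2 * (∫ x in t.openHull, ‖fderiv ℝ (u t) x‖ ^ 2) +
      ∑ t' ∈ T.tris.erase t, edgeJump u t t') := by
  rw [localEnergy, hu.lintegral_h1Density ht, Finset.sum_comm, ENNReal.ofReal_add (by positivity)
    (Finset.sum_nonneg fun _ _ => edgeJump_nonneg _ _ _),
    ENNReal.ofReal_sum_of_nonneg fun _ _ => edgeJump_nonneg _ _ _]
  congr 1
  exact Finset.sum_congr rfl fun t' ht' =>
    (hu.ofReal_edgeJump ht (Finset.mem_of_mem_erase ht')).symm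

theorem PwH1.sum_localEnergy_le (hu : T.PwH1 u) (D : ℝ) :
    ∑ t ∈ T.tris, localEnergy T D u t ≤ ENNReal.ofReal ((2 + D ^ 2) * T.normSq u) := by
  rw [Finset.sum_congr rfl fun t ht => hu.localEnergy_eq ht, ← ENNReal.ofReal_sum_of_nonneg]
  · refine ENNReal.ofReal_le_ofReal ?_
    rw [Finset.sum_add_distrib, Finset.sum_add_distrib, ← Finset.mul_sum, ← Finset.mul_sum,
      ← two_mul_jumpSq]
    change 2 * T.sqL2 u + D ^ 2 * T.gradSq u + 2 * T.jumpSq u ≤ _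
    rw [normSq]
    nlinarith [mul_nonneg (sq_nonneg D) (T.sqL2_nonneg u), T.gradSq_nonneg u,
      mul_nonneg (sq_nonneg D) (T.jumpSq_nonneg u)]
  · intro t _
    have := Finset.sum_nonneg fun t' (_ : t' ∈ T.tris.erase t) => edgeJump_nonneg u t t'
    positivity

theorem PwH1.measurable_indicator_openEdge (hu : T.PwH1 u) (ht : t ∈ T.tris) (i : Fin 3) :
    Measurable ((t.openEdge i).indicator fun z => ENNReal.ofReal (u t z ^ 2)) := by
  have hcont : ContinuousOn (fun z => u t z ^ 2) (t.openEdge i) := ((hu t ht).1.mono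
    ((openSegment_subset_segment ℝ _ _).trans (t.segment_edge_subset_closedHull i))).pow 2
  rw [← piecewise_eq_indicator]
  exact (ENNReal.continuous_ofReal.comp_continuousOn hcont).measurable_piecewise
    continuousOn_const (measurableSet_openSegment ((T.nondeg t ht).edge_fst_ne_snd i))

theorem PwH1.lintegral_traceDensity (hu : T.PwH1 u) :
    ∫⁻ z in frontier Ω, traceDensity T u z ∂μH[1] = ∑ t ∈ T.tris, ∑ i,
      if t.HasBoundaryEdge Ω i then
        ∫⁻ z in t.openEdge i, ENNReal.ofReal (u t z ^ 2) ∂μH[1] else 0 := by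
  have hmeas (t : Tri) (ht : t ∈ T.tris) (i : Fin 3) : Measurable fun z =>
      if t.HasBoundaryEdge Ω i then
        (t.openEdge i).indicator (fun z => ENNReal.ofReal (u t z ^ 2)) z else 0 := by
    split_ifs
    exacts [hu.measurable_indicator_openEdge ht i, measurable_const]
  unfold traceDensity
  rw [lintegral_finsetSum _ fun t ht => Finset.measurable_sum _ fun i _ => hmeas t ht i]
  refine Finset.sum_congr rfl fun t ht => ?_
  rw [lintegral_finsetSum _ fun i _ => hmeas t ht i]
  refine Finset.sum_congr rfl fun i _ => ?_
  split_ifs with hb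
  · rw [setLIntegral_indicator (measurableSet_openSegment ((T.nondeg t ht).edge_fst_ne_snd i)),
      inter_eq_left.2 hb.openEdge_subset]
  · exact lintegral_zero

theorem bdrySq_eq_sum (T : Triangulation Ω) (u : Tri → Pt → ℝ) :
    T.bdrySq u = ∑ t ∈ T.tris, ∑ i, if t.HasBoundaryEdge Ω i then
      segInt (t.edge i).1 (t.edge i).2 (fun x => u t x ^ 2) else 0 :=
  Finset.sum_congr rfl fun t _ => t.sum_map_edgeList _

theorem PwH1.ofReal_bdrySq (hu : T.PwH1 u) :
    ENNReal.ofReal (T.bdrySq u) = ∫⁻ z in frontier Ω, traceDensity T u z ∂μH[1] := by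
  have hnonneg (t : Tri) (i : Fin 3) : 0 ≤ if t.HasBoundaryEdge Ω i then
      segInt (t.edge i).1 (t.edge i).2 (fun x => u t x ^ 2) else 0 := by
    split_ifs
    exacts [segInt_nonneg fun _ => sq_nonneg _, le_rfl]
  rw [hu.lintegral_traceDensity, bdrySq_eq_sum,
    ENNReal.ofReal_sum_of_nonneg fun t _ => Finset.sum_nonneg fun i _ => hnonneg t i]
  refine Finset.sum_congr rfl fun t ht => ?_
  rw [ENNReal.ofReal_sum_of_nonneg fun i _ => hnonneg t i]
  refine Finset.sum_congr rfl fun i _ => ?_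
  rw [apply_ite ENNReal.ofReal, ENNReal.ofReal_zero,
    ofReal_segInt ((T.nondeg t ht).edge_fst_ne_snd i) (fun _ => sq_nonneg _)
      (((hu t ht).1.mono (t.segment_edge_subset_closedHull i)).pow 2)]

end Triangulation

/-- Trace theorem for piecewise `H¹` functions (squared form):
`‖u‖²_{L²(∂Ω)} ≤ C ‖u‖²_{H¹_h}` with `C` depending only on `Ω` and `𝒦`. -/
theorem trace_theorem_piecewise_H1 (Ω : Set Pt) (hΩ : IsPolygon Ω) (K : ℝ) :
    ∃ C : ℝ, 0 < C ∧ ∀ T : Triangulation Ω, T.ShapeRegular K →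
      ∀ u : Tri → Pt → ℝ, T.PwH1 u → T.bdrySq u ≤ C * T.normSq u := by
  obtain hempty | ⟨⟨T₀⟩⟩ := isEmpty_or_nonempty (Triangulation Ω)
  · exact ⟨1, one_pos, fun T => hempty.elim T⟩
  obtain ⟨M, hM, hbound⟩ := T₀.exists_setLIntegral_frontier_traceDensity_le hΩ.2.1 K
  set D := Metric.diam Ω
  refine ⟨M.toReal * (2 + D ^ 2) + 1, by positivity, fun T hK u hu => ?_⟩
  have hnorm := T.normSq_nonneg u
  have htrace : T.bdrySq u ≤ M.toReal * ((2 + D ^ 2) * T.normSq u) := by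
    refine (ENNReal.ofReal_le_ofReal_iff (by positivity)).1 ?_
    calc ENNReal.ofReal (T.bdrySq u)
        = ∫⁻ z in frontier Ω, Triangulation.traceDensity T u z ∂μH[1] := hu.ofReal_bdrySq
      _ ≤ M * ∑ t ∈ T.tris, Triangulation.localEnergy T D u t := hbound T hK u hu
      _ ≤ M * ENNReal.ofReal ((2 + D ^ 2) * T.normSq u) := by
          gcongr; exact hu.sum_localEnergy_le D
      _ = ENNReal.ofReal (M.toReal * ((2 + D ^ 2) * T.normSq u)) := by
          rw [ENNReal.ofReal_mul ENNReal.toReal_nonneg, ENNReal.ofReal_toReal hM]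
  linarith
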